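/- arXiv:2401.08078 — 2 statements merged into one kernel-verified Lean document; each statement's English description precedes it below -/
import Mathlib

section
/- Let (CoFib, Fib, Weq) be a closed model structure on an exact category 𝒜. Assume that the cofibrations are exactly the inflations with cofibrant cokernel and that every trivial fibration is a deflation. Then (𝒞, T𝓕) is a complete cotorsion pair in 𝒜, where 𝒞 is the class of cofibrant objects and T𝓕 is the class of trivially fibrant objects. -/
open CategoryTheory Limits ZeroObject

universe v u

/-- An exact structure (Quillen exact category) on an additive category `𝒜`:
a class of conflations (kernel-cokernel pairs), closed under isomorphisms,
with identities deflations, deflations closed under composition and stable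
under pullback, and inflations stable under pushout. -/
structure ExactStructure (𝒜 : Type u) [Category.{v} 𝒜] [Preadditive 𝒜]
    [HasZeroObject 𝒜] [HasBinaryBiproducts 𝒜] : Type (max u v) where
  conflation : ∀ ⦃X Y Z : 𝒜⦄, (X ⟶ Y) → (Y ⟶ Z) → Prop
  comp_zero : ∀ {X Y Z : 𝒜} {i : X ⟶ Y} {d : Y ⟶ Z}, conflation i d → i ≫ d = 0
  isKernel : ∀ {X Y Z : 𝒜} {i : X ⟶ Y} {d : Y ⟶ Z} (h : conflation i d),
    Nonempty (IsLimit (KernelFork.ofι i (comp_zero h)))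
  isCokernel : ∀ {X Y Z : 𝒜} {i : X ⟶ Y} {d : Y ⟶ Z} (h : conflation i d),
    Nonempty (IsColimit (CokernelCofork.ofπ d (comp_zero h)))
  conflation_iso : ∀ {X Y Z X' Y' Z' : 𝒜} {i : X ⟶ Y} {d : Y ⟶ Z}
    (eX : X ≅ X') (eY : Y ≅ Y') (eZ : Z ≅ Z') {i' : X' ⟶ Y'} {d' : Y' ⟶ Z'},
    conflation i d → i ≫ eY.hom = eX.hom ≫ i' → d ≫ eZ.hom = eY.hom ≫ d' →
    conflation i' d'
  id_deflation : ∀ X : 𝒜, conflation (0 : (0 : 𝒜) ⟶ X) (𝟙 X)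
  deflation_comp : ∀ {X Y Z X' W : 𝒜} {i : X ⟶ Y} {d : Y ⟶ Z} {i' : X' ⟶ Z} {d' : Z ⟶ W},
    conflation i d → conflation i' d' → ∃ (K : 𝒜) (k : K ⟶ Y), conflation k (d ≫ d')
  pullback_deflation : ∀ {X Y Z Z' : 𝒜} {i : X ⟶ Y} {d : Y ⟶ Z},
    conflation i d → ∀ (f : Z' ⟶ Z),
    ∃ (Y' : 𝒜) (f' : Y' ⟶ Y) (d' : Y' ⟶ Z') (K : 𝒜) (k : K ⟶ Y'),
      IsPullback f' d' d f ∧ conflation k d'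
  pushout_inflation : ∀ {X Y Z X' : 𝒜} {i : X ⟶ Y} {d : Y ⟶ Z},
    conflation i d → ∀ (f : X ⟶ X'),
    ∃ (Y' : 𝒜) (f' : Y ⟶ Y') (i' : X' ⟶ Y') (Q : 𝒜) (q : Y' ⟶ Q),
      IsPushout i f f' i' ∧ conflation i' q

variable {𝒜 : Type u} [Category.{v} 𝒜] [Preadditive 𝒜] [HasZeroObject 𝒜]
  [HasBinaryBiproducts 𝒜]

/-- `f` is an inflation: the first map of some conflation. -/
def IsInflation (E : ExactStructure 𝒜) {X Y : 𝒜} (i : X ⟶ Y) : Prop :=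
  ∃ (Z : 𝒜) (d : Y ⟶ Z), E.conflation i d

/-- `f` is a deflation: the second map of some conflation. -/
def IsDeflation (E : ExactStructure 𝒜) {Y Z : 𝒜} (d : Y ⟶ Z) : Prop :=
  ∃ (X : 𝒜) (i : X ⟶ Y), E.conflation i d

/-- `𝒜` is weakly idempotent complete: every split epimorphism is a deflation. -/
def IsWIC (E : ExactStructure 𝒜) : Prop :=
  ∀ {X Y : 𝒜} (d : X ⟶ Y) (s : Y ⟶ X), s ≫ d = 𝟙 Y → IsDeflation E d

/-- `Ext¹(A,B) = 0`: every conflation `B ⟶ M ⟶ A` splits. -/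
def Ext1IsZero (E : ExactStructure 𝒜) (A B : 𝒜) : Prop :=
  ∀ {M : 𝒜} (i : B ⟶ M) (d : M ⟶ A), E.conflation i d → ∃ r : M ⟶ B, i ≫ r = 𝟙 B

/-- `(X, Y)` is a cotorsion pair: each class is the `Ext¹`-orthogonal of the other. -/
def IsCotorsionPair (E : ExactStructure 𝒜) (X Y : Set 𝒜) : Prop :=
  (∀ A : 𝒜, A ∈ X ↔ ∀ B ∈ Y, Ext1IsZero E A B) ∧
  (∀ B : 𝒜, B ∈ Y ↔ ∀ A ∈ X, Ext1IsZero E A B)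

/-- Completeness of a cotorsion pair: every object has approximation sequences. -/
def IsCompleteCP (E : ExactStructure 𝒜) (X Y : Set 𝒜) : Prop :=
  ∀ A : 𝒜,
    (∃ (Y₀ X₀ : 𝒜) (i : Y₀ ⟶ X₀) (d : X₀ ⟶ A), E.conflation i d ∧ X₀ ∈ X ∧ Y₀ ∈ Y) ∧
    (∃ (Y₁ X₁ : 𝒜) (i : A ⟶ Y₁) (d : Y₁ ⟶ X₁), E.conflation i d ∧ X₁ ∈ X ∧ Y₁ ∈ Y)

/-- Heredity of a cotorsion pair: `X` is closed under kernels of deflations and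
`Y` is closed under cokernels of inflations. -/
def IsHereditaryCP (E : ExactStructure 𝒜) (X Y : Set 𝒜) : Prop :=
  (∀ {K A B : 𝒜} (i : K ⟶ A) (d : A ⟶ B), E.conflation i d → A ∈ X → B ∈ X → K ∈ X) ∧
  (∀ {K A B : 𝒜} (i : K ⟶ A) (d : A ⟶ B), E.conflation i d → K ∈ Y → A ∈ Y → B ∈ Y)

/-- `t : W ⟶ B` is a right `ω`-approximation of `B`. -/
def IsRightApprox (ω : Set 𝒜) {W B : 𝒜} (t : W ⟶ B) : Prop :=
  W ∈ ω ∧ ∀ (W' : 𝒜), W' ∈ ω → ∀ g : W' ⟶ B, ∃ h : W' ⟶ W, h ≫ t = g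

/-- `ω` is contravariantly finite: every object has a right `ω`-approximation. -/
def IsContravariantlyFinite (ω : Set 𝒜) : Prop :=
  ∀ B : 𝒜, ∃ (W : 𝒜) (t : W ⟶ B), IsRightApprox ω t

/-- A full additive subcategory closed under isomorphisms and direct summands,
viewed as a class of objects. -/
def AdditivelyClosed (S : Set 𝒜) : Prop :=
  (0 : 𝒜) ∈ S ∧ (∀ A B : 𝒜, A ∈ S → B ∈ S → (A ⊞ B) ∈ S) ∧
  (∀ {A B : 𝒜}, (A ≅ B) → A ∈ S → B ∈ S) ∧
  (∀ {A B : 𝒜} (i : A ⟶ B) (r : B ⟶ A), i ≫ r = 𝟙 A → B ∈ S → A ∈ S)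

/-- `CoFib_ω`: inflations with cokernel in `X`. -/
def CoFibO (E : ExactStructure 𝒜) (X : Set 𝒜) : MorphismProperty 𝒜 :=
  fun _ B f => ∃ (Z : 𝒜) (d : B ⟶ Z), E.conflation f d ∧ Z ∈ X

/-- `Fib_ω`: the `ω`-epic morphisms. -/
def FibO (ω : Set 𝒜) : MorphismProperty 𝒜 :=
  fun A B f => ∀ (W : 𝒜), W ∈ ω → ∀ g : W ⟶ B, ∃ h : W ⟶ A, h ≫ f = g

/-- `Weq_ω`: morphisms `f : A ⟶ B` such that for some `W ∈ ω` and `t : W ⟶ B`,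
`(f,t) : A ⊞ W ⟶ B` is a deflation with kernel in `Y`. -/
def WeqO (E : ExactStructure 𝒜) (ω Y : Set 𝒜) : MorphismProperty 𝒜 :=
  fun A B f => ∃ (W : 𝒜) (_ : W ∈ ω) (t : W ⟶ B) (K : 𝒜) (k : K ⟶ A ⊞ W),
    E.conflation k (biprod.desc f t) ∧ K ∈ Y

/-- `TCoFib_ω`: split monomorphisms with cokernel in `ω`. -/
def TCoFibO (E : ExactStructure 𝒜) (ω : Set 𝒜) : MorphismProperty 𝒜 :=
  fun A B f => (∃ r : B ⟶ A, f ≫ r = 𝟙 A) ∧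
    ∃ (Z : 𝒜) (d : B ⟶ Z), E.conflation f d ∧ Z ∈ ω

/-- `TFib_ω`: deflations with kernel in `Y`. -/
def TFibO (E : ExactStructure 𝒜) (Y : Set 𝒜) : MorphismProperty 𝒜 :=
  fun A _ f => ∃ (K : 𝒜) (k : K ⟶ A), E.conflation k f ∧ K ∈ Y

/-- `g` is a retract of `f`. -/
def IsRetractMor {A' B' A B : 𝒜} (g : A' ⟶ B') (f : A ⟶ B) : Prop :=
  ∃ (φ₁ : A' ⟶ A) (ψ₁ : A ⟶ A') (φ₂ : B' ⟶ B) (ψ₂ : B ⟶ B'),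
    φ₁ ≫ ψ₁ = 𝟙 A' ∧ φ₂ ≫ ψ₂ = 𝟙 B' ∧ φ₁ ≫ f = g ≫ φ₂ ∧ f ≫ ψ₂ = ψ₁ ≫ g

/-- A (closed, Quillen) model structure, given by classes of cofibrations,
fibrations and weak equivalences. -/
structure IsModelStructure (C F W : MorphismProperty 𝒜) : Prop where
  weq_comp : ∀ {X Y Z : 𝒜} (f : X ⟶ Y) (g : Y ⟶ Z), W f → W g → W (f ≫ g)
  weq_cancel_left : ∀ {X Y Z : 𝒜} (f : X ⟶ Y) (g : Y ⟶ Z), W f → W (f ≫ g) → W g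
  weq_cancel_right : ∀ {X Y Z : 𝒜} (f : X ⟶ Y) (g : Y ⟶ Z), W g → W (f ≫ g) → W f
  retract_cofib : ∀ {A' B' A B : 𝒜} (g : A' ⟶ B') (f : A ⟶ B),
    IsRetractMor g f → C f → C g
  retract_fib : ∀ {A' B' A B : 𝒜} (g : A' ⟶ B') (f : A ⟶ B),
    IsRetractMor g f → F f → F g
  retract_weq : ∀ {A' B' A B : 𝒜} (g : A' ⟶ B') (f : A ⟶ B),
    IsRetractMor g f → W f → W g
  lifting_left : ∀ {A B X Y : 𝒜} (i : A ⟶ B) (p : X ⟶ Y) (a : A ⟶ X) (b : B ⟶ Y),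
    C i → W i → F p → a ≫ p = i ≫ b → ∃ s : B ⟶ X, i ≫ s = a ∧ s ≫ p = b
  lifting_right : ∀ {A B X Y : 𝒜} (i : A ⟶ B) (p : X ⟶ Y) (a : A ⟶ X) (b : B ⟶ Y),
    C i → F p → W p → a ≫ p = i ≫ b → ∃ s : B ⟶ X, i ≫ s = a ∧ s ≫ p = b
  fact_left : ∀ {A B : 𝒜} (f : A ⟶ B), ∃ (Z : 𝒜) (i : A ⟶ Z) (p : Z ⟶ B),
    i ≫ p = f ∧ C i ∧ W i ∧ F p
  fact_right : ∀ {A B : 𝒜} (f : A ⟶ B), ∃ (Z : 𝒜) (j : A ⟶ Z) (q : Z ⟶ B),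
    j ≫ q = f ∧ C j ∧ F q ∧ W q

/-- An object is cofibrant if `0 ⟶ X` is a cofibration. -/
def Cofibrant (C : MorphismProperty 𝒜) (A : 𝒜) : Prop := C (0 : (0 : 𝒜) ⟶ A)

/-- An object is fibrant if `X ⟶ 0` is a fibration. -/
def Fibrant (F : MorphismProperty 𝒜) (A : 𝒜) : Prop := F (0 : A ⟶ (0 : 𝒜))

/-- An object is trivial if `0 ⟶ X` is a weak equivalence. -/
def TrivialObj (W : MorphismProperty 𝒜) (A : 𝒜) : Prop := W (0 : (0 : 𝒜) ⟶ A)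

/-- `P` is projective in the exact category. -/
def IsProjObj (E : ExactStructure 𝒜) (P : 𝒜) : Prop :=
  ∀ {A B : 𝒜} (d : A ⟶ B), IsDeflation E d → ∀ g : P ⟶ B, ∃ h : P ⟶ A, h ≫ d = g

/-- The exact category has enough projective objects. -/
def HasEnoughProj (E : ExactStructure 𝒜) : Prop :=
  ∀ X : 𝒜, ∃ (P : 𝒜) (d : P ⟶ X), IsProjObj E P ∧ IsDeflation E d

/-- Cofibrations are exactly the inflations with cofibrant cokernel. -/
def CofibsAreInflWithCofibCoker (E : ExactStructure 𝒜) (C : MorphismProperty 𝒜) : Prop :=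
  ∀ {A B : 𝒜} (f : A ⟶ B),
    C f ↔ ∃ (Z : 𝒜) (d : B ⟶ Z), E.conflation f d ∧ Cofibrant C Z

/-- Fibrations are exactly the deflations with fibrant kernel. -/
def FibsAreDeflWithFibKer (E : ExactStructure 𝒜) (F : MorphismProperty 𝒜) : Prop :=
  ∀ {A B : 𝒜} (f : A ⟶ B),
    F f ↔ ∃ (K : 𝒜) (k : K ⟶ A), E.conflation k f ∧ Fibrant F K

/-- Trivial fibrations are exactly the deflations with trivially fibrant kernel. -/
def TrivFibsAreDeflWithTrivFibKer (E : ExactStructure 𝒜)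
    (F W : MorphismProperty 𝒜) : Prop :=
  ∀ {A B : 𝒜} (f : A ⟶ B),
    (F f ∧ W f) ↔ ∃ (K : 𝒜) (k : K ⟶ A), E.conflation k f ∧ Fibrant F K ∧ TrivialObj W K

/-- Every cofibration is an inflation. -/
def CofibsAreInfl (E : ExactStructure 𝒜) (C : MorphismProperty 𝒜) : Prop :=
  ∀ {A B : 𝒜} (f : A ⟶ B), C f → IsInflation E f

/-- Every trivial fibration is a deflation. -/
def TrivFibsAreDefl (E : ExactStructure 𝒜) (F W : MorphismProperty 𝒜) : Prop :=
  ∀ {A B : 𝒜} (f : A ⟶ B), F f → W f → IsDeflation E f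

/-- An exact model structure in the sense of Gillespie. -/
def IsExactModelStr (E : ExactStructure 𝒜) (C F W : MorphismProperty 𝒜) : Prop :=
  IsModelStructure C F W ∧ CofibsAreInflWithCofibCoker E C ∧ FibsAreDeflWithFibKer E F

/-- A weakly projective model structure: every object is fibrant, cofibrations are
exactly the inflations with cofibrant cokernel, and trivial fibrations are exactly
the deflations with trivially fibrant kernel. -/
def IsWeaklyProjModelStr (E : ExactStructure 𝒜) (C F W : MorphismProperty 𝒜) : Prop :=
  IsModelStructure C F W ∧ (∀ A : 𝒜, Fibrant F A) ∧
    CofibsAreInflWithCofibCoker E C ∧ TrivFibsAreDeflWithTrivFibKer E F W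

/-- A projective model structure: an exact model structure with every object fibrant. -/
def IsProjectiveModelStr (E : ExactStructure 𝒜) (C F W : MorphismProperty 𝒜) : Prop :=
  IsExactModelStr E C F W ∧ (∀ A : 𝒜, Fibrant F A)

/-- A class of objects is thick: closed under direct summands and two-out-of-three
in conflations. -/
def IsThick (E : ExactStructure 𝒜) (S : Set 𝒜) : Prop :=
  (∀ {A B : 𝒜} (i : A ⟶ B) (r : B ⟶ A), i ≫ r = 𝟙 A → B ∈ S → A ∈ S) ∧
  (∀ {X Y Z : 𝒜} (i : X ⟶ Y) (d : Y ⟶ Z), E.conflation i d →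
    ((X ∈ S → Y ∈ S → Z ∈ S) ∧ (X ∈ S → Z ∈ S → Y ∈ S) ∧ (Y ∈ S → Z ∈ S → X ∈ S)))

/-!
Only the weak factorization system of cofibrations and trivial fibrations matters. Lifting a
cofibration `B ⟶ M` with cofibrant cokernel against `B ⟶ 0` splits the conflation, so cofibrant
objects are `Ext¹`-orthogonal to trivially fibrant ones. Factoring `0 ⟶ A` and `A ⟶ 0` yields the
two approximation sequences; the kernel in the first is trivially fibrant because it is a base
change of a trivial fibration. An object orthogonal to one of the two classes splits the
corresponding approximation sequence, hence is a retract of an object of the other class.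
-/

namespace ExactStructure

variable {E : ExactStructure 𝒜} {X Y Z : 𝒜} {i : X ⟶ Y} {d : Y ⟶ Z}

theorem mono_of_conflation (h : E.conflation i d) : Mono i := by
  obtain ⟨hi⟩ := E.isKernel h
  exact ⟨fun _ _ hab => Fork.IsLimit.hom_ext hi hab⟩

theorem epi_of_conflation (h : E.conflation i d) : Epi d := by
  obtain ⟨hd⟩ := E.isCokernel h
  exact ⟨fun _ _ hab => Cofork.IsColimit.hom_ext hd hab⟩

theorem isPullback_of_conflation (h : E.conflation i d) :
    IsPullback i (0 : X ⟶ (0 : 𝒜)) d (0 : (0 : 𝒜) ⟶ Z) := by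
  obtain ⟨hi⟩ := E.isKernel h
  have := mono_of_conflation h
  exact ⟨⟨by simp [E.comp_zero h]⟩, ⟨PullbackCone.IsLimit.mk _
    (fun s => Fork.IsLimit.lift hi s.fst (by simp [s.condition]))
    (fun s => Fork.IsLimit.lift_ι' hi _ _)
    (fun s => (isZero_zero 𝒜).eq_of_tgt _ _)
    (fun s m hm _ => (cancel_mono i).1 (hm.trans (Fork.IsLimit.lift_ι' hi _ _).symm))⟩⟩

theorem exists_section_of_retraction (h : E.conflation i d) {r : Y ⟶ X} (hr : i ≫ r = 𝟙 X) :
    ∃ s : Z ⟶ Y, s ≫ d = 𝟙 Z := by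
  obtain ⟨hd⟩ := E.isCokernel h
  have hzero : i ≫ (𝟙 Y - r ≫ i) = 0 := by simp [reassoc_of% hr]
  obtain ⟨s, hs : d ≫ s = 𝟙 Y - r ≫ i⟩ := CokernelCofork.IsColimit.desc' hd _ hzero
  have := epi_of_conflation h
  refine ⟨s, (cancel_epi d).1 ?_⟩
  simp [reassoc_of% hs, E.comp_zero h]

end ExactStructure

omit [HasBinaryBiproducts 𝒜] in
theorem Cofibrant.of_retract {L : MorphismProperty 𝒜} [L.IsStableUnderRetracts] {A B : 𝒜}
    (r : Retract A B) (hB : Cofibrant L B) : Cofibrant L A :=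
  L.of_retract (f := (0 : (0 : 𝒜) ⟶ A)) (g := (0 : (0 : 𝒜) ⟶ B))
    { i := Arrow.homMk (𝟙 _) r.i
      r := Arrow.homMk (𝟙 _) r.r } hB

namespace Fibrant

variable {R : MorphismProperty 𝒜} {A B : 𝒜}

omit [HasBinaryBiproducts 𝒜] in
theorem of_retract [R.IsStableUnderRetracts] (r : Retract A B) (hB : Fibrant R B) :
    Fibrant R A :=
  R.of_retract (f := (0 : A ⟶ (0 : 𝒜))) (g := (0 : B ⟶ (0 : 𝒜)))
    { i := Arrow.homMk r.i (𝟙 _)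
      r := Arrow.homMk r.r (𝟙 _) } hB

theorem of_conflation [R.IsStableUnderBaseChange] {E : ExactStructure 𝒜} {K : 𝒜} {k : K ⟶ A}
    {p : A ⟶ B} (h : E.conflation k p) (hp : R p) : Fibrant R K :=
  R.of_isPullback (ExactStructure.isPullback_of_conflation h) hp

end Fibrant

omit [HasBinaryBiproducts 𝒜] in
theorem exists_retraction_of_hasLiftingProperty {A B : 𝒜} (i : A ⟶ B)
    [HasLiftingProperty i (0 : A ⟶ (0 : 𝒜))] : ∃ r : B ⟶ A, i ≫ r = 𝟙 A := by
  have sq : CommSq (𝟙 A) i (0 : A ⟶ (0 : 𝒜)) (0 : B ⟶ (0 : 𝒜)) := ⟨by simp⟩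
  exact ⟨sq.lift, sq.fac_left⟩

section WeakFactorizationSystem

open MorphismProperty

variable {E : ExactStructure 𝒜} {L R : MorphismProperty 𝒜}

theorem ext1IsZero_of_cofibrant_of_fibrant [IsWeakFactorizationSystem L R]
    (hL : CofibsAreInflWithCofibCoker E L) {A B : 𝒜} (hA : Cofibrant L A) (hB : Fibrant R B) :
    Ext1IsZero E A B := by
  intro M i d hid
  have := hasLiftingProperty_of_wfs i _ ((hL i).2 ⟨A, d, hid, hA⟩) hB
  exact exists_retraction_of_hasLiftingProperty i

variable (L) in
theorem exists_cofibrant_approximation [HasFactorization L R] [R.IsStableUnderBaseChange]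
    (hR : ∀ ⦃A B : 𝒜⦄ (f : A ⟶ B), R f → IsDeflation E f) (A : 𝒜) :
    ∃ (K X : 𝒜) (i : K ⟶ X) (d : X ⟶ A),
      E.conflation i d ∧ Cofibrant L X ∧ Fibrant R K := by
  let fac := factorizationData L R (0 : (0 : 𝒜) ⟶ A)
  obtain ⟨K, k, hk⟩ := hR fac.p fac.hp
  have hZ : Cofibrant L fac.Z := by
    simpa only [Cofibrant, (isZero_zero 𝒜).eq_of_src fac.i 0] using fac.hi
  exact ⟨K, fac.Z, k, fac.p, hk, hZ, .of_conflation hk fac.hp⟩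

variable (R) in
theorem exists_fibrant_approximation [HasFactorization L R]
    (hL : CofibsAreInflWithCofibCoker E L) (A : 𝒜) :
    ∃ (Y X : 𝒜) (i : A ⟶ Y) (d : Y ⟶ X),
      E.conflation i d ∧ Cofibrant L X ∧ Fibrant R Y := by
  let fac := factorizationData L R (0 : A ⟶ (0 : 𝒜))
  obtain ⟨X, d, hd, hX⟩ := (hL fac.i).1 fac.hi
  have hZ : Fibrant R fac.Z := by
    simpa only [Fibrant, (isZero_zero 𝒜).eq_of_tgt fac.p 0] using fac.hp
  exact ⟨fac.Z, X, fac.i, d, hd, hX, hZ⟩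

theorem cofibrant_of_forall_ext1IsZero [HasFactorization L R] [R.IsStableUnderBaseChange]
    [L.IsStableUnderRetracts] (hR : ∀ ⦃A B : 𝒜⦄ (f : A ⟶ B), R f → IsDeflation E f) {A : 𝒜}
    (hA : ∀ B, Fibrant R B → Ext1IsZero E A B) : Cofibrant L A := by
  obtain ⟨K, X, i, d, hid, hX, hK⟩ := exists_cofibrant_approximation L hR A
  obtain ⟨r, hr⟩ := hA K hK i d hid
  obtain ⟨s, hs⟩ := ExactStructure.exists_section_of_retraction hid hr
  exact hX.of_retract ⟨s, d, hs⟩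

theorem fibrant_of_forall_ext1IsZero [HasFactorization L R] [R.IsStableUnderRetracts]
    (hL : CofibsAreInflWithCofibCoker E L) {B : 𝒜}
    (hB : ∀ A, Cofibrant L A → Ext1IsZero E A B) : Fibrant R B := by
  obtain ⟨Y, X, i, d, hid, hX, hY⟩ := exists_fibrant_approximation R hL B
  obtain ⟨r, hr⟩ := hB X hX i d hid
  exact hY.of_retract ⟨i, r, hr⟩

theorem stmt_16_general (E : ExactStructure 𝒜) (L R : MorphismProperty 𝒜)
    [IsWeakFactorizationSystem L R] (hL : CofibsAreInflWithCofibCoker E L)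
    (hR : ∀ ⦃A B : 𝒜⦄ (f : A ⟶ B), R f → IsDeflation E f) :
    IsCotorsionPair E {A : 𝒜 | Cofibrant L A} {B : 𝒜 | Fibrant R B} ∧
    IsCompleteCP E {A : 𝒜 | Cofibrant L A} {B : 𝒜 | Fibrant R B} := by
  have : L.IsStableUnderRetracts := llp_eq_of_wfs L R ▸ inferInstance
  have : R.IsStableUnderRetracts := rlp_eq_of_wfs L R ▸ inferInstance
  have : R.IsStableUnderBaseChange := rlp_eq_of_wfs L R ▸ inferInstance
  refine ⟨⟨fun A => ⟨fun hA B hB => ?_, cofibrant_of_forall_ext1IsZero hR⟩,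
    fun B => ⟨fun hB A hA => ?_, fibrant_of_forall_ext1IsZero hL⟩⟩,
    fun A => ⟨exists_cofibrant_approximation L hR A, exists_fibrant_approximation R hL A⟩⟩
  all_goals exact ext1IsZero_of_cofibrant_of_fibrant hL hA hB

end WeakFactorizationSystem

omit [Preadditive 𝒜] [HasZeroObject 𝒜] [HasBinaryBiproducts 𝒜] in
theorem IsRetractMor.of_retractArrow {A' B' A B : 𝒜} {g : A' ⟶ B'} {f : A ⟶ B}
    (h : RetractArrow g f) : IsRetractMor g f :=
  ⟨h.i.left, h.r.left, h.i.right, h.r.right, h.retract_left, h.retract_right, h.i_w, h.r_w.symm⟩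

namespace IsModelStructure

variable {C F W : MorphismProperty 𝒜}

omit [HasBinaryBiproducts 𝒜]

omit [Preadditive 𝒜] [HasZeroObject 𝒜] in
theorem isWeakFactorizationSystem (h : IsModelStructure C F W) :
    MorphismProperty.IsWeakFactorizationSystem C (F ⊓ W) := by
  have : MorphismProperty.HasFactorization C (F ⊓ W) :=
    ⟨fun f => let ⟨Z, j, q, fac, hj, hqF, hqW⟩ := h.fact_right f
      ⟨⟨Z, j, q, fac, hj, hqF, hqW⟩⟩⟩
  have : C.IsStableUnderRetracts :=
    ⟨fun r hC => h.retract_cofib _ _ (.of_retractArrow r) hC⟩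
  have : (F ⊓ W).IsStableUnderRetracts :=
    ⟨fun r hFW => ⟨h.retract_fib _ _ (.of_retractArrow r) hFW.1,
      h.retract_weq _ _ (.of_retractArrow r) hFW.2⟩⟩
  refine .mk' _ _ fun i p hi hp => ⟨fun {a b} sq => ?_⟩
  obtain ⟨s, hs, hsp⟩ := h.lifting_right i p a b hi hp.1 hp.2 sq.w
  exact ⟨⟨⟨s, hs, hsp⟩⟩⟩

omit [Preadditive 𝒜] [HasZeroObject 𝒜] in
theorem weq_id (h : IsModelStructure C F W) (X : 𝒜) : W (𝟙 X) := by
  obtain ⟨Z, i, p, fac, -, hi, -⟩ := h.fact_left (𝟙 X)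
  exact h.retract_weq (𝟙 X) i ⟨𝟙 X, 𝟙 X, i, p, by simp, fac, by simp, by simp [fac]⟩ hi

theorem trivialObj_iff_weq_to_zero (h : IsModelStructure C F W) (B : 𝒜) :
    TrivialObj W B ↔ W (0 : B ⟶ (0 : 𝒜)) := by
  have hcomp : W ((0 : (0 : 𝒜) ⟶ B) ≫ (0 : B ⟶ (0 : 𝒜))) := by
    simpa only [comp_zero, id_zero] using h.weq_id (0 : 𝒜)
  exact ⟨fun hB => h.weq_cancel_left _ _ hB hcomp, fun hB => h.weq_cancel_right _ _ hB hcomp⟩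

theorem fibrant_inf_iff (h : IsModelStructure C F W) (B : 𝒜) :
    Fibrant (F ⊓ W) B ↔ Fibrant F B ∧ TrivialObj W B :=
  and_congr_right' (h.trivialObj_iff_weq_to_zero B).symm

end IsModelStructure

/-- If cofibrations are exactly inflations with cofibrant cokernel and every
trivial fibration is a deflation, then `(𝒞, T𝓕)` is a complete cotorsion pair. -/
theorem stmt_16 (E : ExactStructure 𝒜) (C F W : MorphismProperty 𝒜)
    (hms : IsModelStructure C F W)
    (hcof : CofibsAreInflWithCofibCoker E C)
    (htf : TrivFibsAreDefl E F W) :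
    IsCotorsionPair E {A : 𝒜 | Cofibrant C A} {B : 𝒜 | Fibrant F B ∧ TrivialObj W B} ∧
    IsCompleteCP E {A : 𝒜 | Cofibrant C A} {B : 𝒜 | Fibrant F B ∧ TrivialObj W B} := by
  have := hms.isWeakFactorizationSystem
  simpa only [hms.fibrant_inf_iff] using
    stmt_16_general E C (F ⊓ W) hcof fun _ _ f hf => htf f hf.1 hf.2
end

section
/- Let 𝒜 be a weakly idempotent complete exact category. A model structure on 𝒜 is both exact and weakly projective if and only if it is projective (i.e. exact with every object fibrant). In this case, the left triangulated structure on the homotopy category Ho(𝒜) is in fact a triangulated category. -/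
open CategoryTheory Limits ZeroObject

universe v u

variable {𝒜 : Type u} [Category.{v} 𝒜] [Preadditive 𝒜] [HasZeroObject 𝒜]
  [HasBinaryBiproducts 𝒜]

/-- The data of a triangulated category structure on a category. -/
structure TriangulatedStructure (D : Type*) [Category D] where
  [preadditive : Preadditive D]
  [hasZeroObject : HasZeroObject D]
  [hasShift : HasShift D ℤ]
  [shiftAdditive : ∀ n : ℤ, (shiftFunctor D n).Additive]
  [pretriangulated : Pretriangulated D]
  [isTriangulated : IsTriangulated D]

/-!
In a projective model structure the trivial fibrations are the deflations with trivial kernel and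
the cofibrant trivial objects are the projective ones, so on cofibrant objects `Ho(𝒜)` is the
stable category. A cofibrant object `X` embeds into a projective object with cofibrant cokernel,
and the kernel of a deflation from a projective object onto `X` is again cofibrant. Splicing such
conflations to the right and to the left makes `X` the cycles of an acyclic complex of projective
objects with cofibrant cycles, and this identifies the stable category with the homotopy category
of these complexes, which is a triangulated subcategory of the homotopy category of all complexes
because it is stable under mapping cones. Its triangulated structure is transported to `Ho(𝒜)`.
-/

section

/-! ### Localizations and equivalences -/

section Localization

variable {C S D : Type*} [Category* C] [Category.{v} S] [Category.{u} D]

lemma map_eq_of_isLocalization_of_isInvertedBy {π : C ⥤ S} (L : C ⥤ D)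
    (W : MorphismProperty C) [L.IsLocalization W] {X Y : C}
    (hX : W.IsInvertedBy (π ⋙ coyoneda.obj (.op (π.obj X)))) {f g : X ⟶ Y}
    (hfg : L.map f = L.map g) : π.map f = π.map g := by
  have := ((areEqualizedByLocalization_iff L W f g).2 hfg).map_eq_of_isInvertedBy _ hX
  simpa using ConcreteCategory.congr_hom this (𝟙 (π.obj X))

-- Extending `π.obj X ⟶ π.obj -` to a functor `G` on the localization, `M` induces a natural
-- transformation from `G` to `M.obj (π.obj X) ⟶ -`, which takes the class of `𝟙` to `𝟙`.
lemma map_surjective_of_isLocalization_of_isInvertedBy {π : C ⥤ S} {M : S ⥤ D}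
    (W : MorphismProperty C) [(π ⋙ M).IsLocalization W] {X : C}
    (hX : W.IsInvertedBy (π ⋙ coyoneda.obj (.op (π.obj X)))) (Y : C) :
    Function.Surjective (M.map : (π.obj X ⟶ π.obj Y) → _) := by
  intro u
  let P := π ⋙ coyoneda.obj (.op (π.obj X)) ⋙ uliftFunctor.{u, v}
  let H := coyoneda.obj (.op (M.obj (π.obj X))) ⋙ uliftFunctor.{v, u}
  have hP : W.IsInvertedBy P := fun A B w hw ↦
    have := hX w hw
    inferInstanceAs (IsIso (uliftFunctor.map ((π ⋙ coyoneda.obj (.op (π.obj X))).map w)))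
  let G := Localization.lift P hP (π ⋙ M)
  let e : (π ⋙ M) ⋙ G ≅ P := Localization.fac P hP (π ⋙ M)
  let α : P ⟶ (π ⋙ M) ⋙ H :=
    { app A := ↾fun s ↦ ⟨M.map s.down⟩
      naturality A B f := by
        ext s
        exact ULift.ext _ _ (M.map_comp s.down (π.map f)) }
  let β : G ⟶ H := Localization.liftNatTrans (π ⋙ M) W P ((π ⋙ M) ⋙ H) G H α
  have hβ (A : C) (t : G.obj ((π ⋙ M).obj A)) : β.app _ t = ⟨M.map (e.hom.app A t).down⟩ :=
    ConcreteCategory.congr_hom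
      (Localization.liftNatTrans_app (π ⋙ M) W P ((π ⋙ M) ⋙ H) G H α A) t
  let x : G.obj ((π ⋙ M).obj X) := e.inv.app X ⟨𝟙 _⟩
  have hx : β.app _ x = ⟨𝟙 _⟩ := by
    have hex : e.hom.app X x = ⟨𝟙 _⟩ := ConcreteCategory.congr_hom (e.inv_hom_id_app X) ⟨𝟙 _⟩
    rw [hβ, hex]
    exact congrArg ULift.up (M.map_id _)
  have hu := ConcreteCategory.congr_hom
    (β.naturality (X := (π ⋙ M).obj X) (Y := (π ⋙ M).obj Y) u) x
  exact ⟨(e.hom.app Y (G.map u x)).down, (congrArg ULift.down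
    ((hβ _ _).symm.trans (hu.trans (congrArg (H.map u) hx)))).trans (Category.id_comp u)⟩

end Localization

lemma nonempty_equivalence_of_map_eq_iff {C D₁ D₂ : Type*} [Category* C] [Category* D₁]
    [Category* D₂] (F : C ⥤ D₁) (G : C ⥤ D₂) [F.Full] [F.EssSurj] [G.Full] [G.EssSurj]
    (h : ∀ {X Y : C} (f g : X ⟶ Y), F.map f = F.map g ↔ G.map f = G.map g) :
    Nonempty (D₁ ≌ D₂) := by
  have hFG : F.homRel = G.homRel := by
    funext X Y f g
    exact propext (h f g)
  have eF := (CategoryTheory.Quotient.lift F.homRel F fun _ _ _ _ h ↦ h).asEquivalence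
  have eG := (CategoryTheory.Quotient.lift G.homRel G fun _ _ _ _ h ↦ h).asEquivalence
  rw [hFG] at eF
  exact ⟨eF.symm.trans eG⟩

lemma trW_isZero_eq_isomorphisms {T : Type*} [Category* T] [Preadditive T] [HasZeroObject T]
    [HasShift T ℤ] [∀ n : ℤ, (shiftFunctor T n).Additive] [Pretriangulated T] :
    ObjectProperty.trW (IsZero : ObjectProperty T) = .isomorphisms T := by
  ext X Y f
  rw [ObjectProperty.trW_iff, MorphismProperty.isomorphisms.iff]
  constructor
  · rintro ⟨Z, g, h, hT, hZ⟩
    exact (Pretriangulated.Triangle.isZero₃_iff_isIso₁ _ hT).1 hZ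
  · intro hf
    obtain ⟨Z, g, h, hT⟩ := Pretriangulated.distinguished_cocone_triangle f
    exact ⟨Z, g, h, hT, (Pretriangulated.Triangle.isZero₃_iff_isIso₁ _ hT).2 hf⟩

-- An equivalence is the Verdier quotient by the zero objects.
lemma nonempty_triangulatedStructure_of_isEquivalence {T D : Type*} [Category* T] [Category* D]
    [Preadditive T] [HasZeroObject T] [HasShift T ℤ] [∀ n : ℤ, (shiftFunctor T n).Additive]
    [Pretriangulated T] [IsTriangulated T] (L : T ⥤ D) [L.IsEquivalence] :
    Nonempty (TriangulatedStructure D) := by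
  let P : ObjectProperty T := IsZero
  have : P.ContainsZero := ⟨⟨0, isZero_zero T, isZero_zero T⟩⟩
  have : P.IsStableUnderShift ℤ := ⟨fun a ↦ ⟨fun X hX ↦ (shiftFunctor T a).map_isZero hX⟩⟩
  have : P.IsClosedUnderIsomorphisms := ⟨fun e h ↦ h.of_iso e.symm⟩
  have : P.IsTriangulatedClosed₂ := .mk' fun t ht h₁ h₃ ↦
    Pretriangulated.Triangle.isZero₂_of_isZero₁₃ t ht h₁ h₃
  have : P.IsTriangulated := {}
  have : L.IsLocalization P.trW :=
    .of_isEquivalence L _ trW_isZero_eq_isomorphisms.le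
  let := Localization.preadditive L P.trW
  have : L.Additive := Localization.functor_additive L P.trW
  let : HasShift D ℤ := HasShift.localized L P.trW ℤ
  let : L.CommShift ℤ := Functor.CommShift.localized L P.trW ℤ
  have : HasZeroObject D := ⟨⟨L.obj 0, L.map_isZero (isZero_zero T)⟩⟩
  have (n : ℤ) : (shiftFunctor D n).Additive := by
    rw [Localization.functor_additive_iff L P.trW]
    exact Functor.additive_of_iso (L.commShiftIso n)
  let : Pretriangulated D := Triangulated.Localization.pretriangulated L P.trW
  have : IsTriangulated D := Triangulated.Localization.isTriangulated L P.trW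
  exact ⟨{}⟩

lemma exists_int_seq {T : ℤ → Type*} (r : ∀ n, T n → T (n + 1) → Prop)
    (hsucc : ∀ n x, ∃ y, r n x y) (hpred : ∀ n y, ∃ x, r n x y) (a : ℤ) (x : T a) :
    ∃ t : ∀ n, T n, t a = x ∧ ∀ n, r n (t n) (t (n + 1)) := by
  choose succ hsucc using hsucc
  choose pred hpred using hpred
  let t (n : ℤ) : T n := n.inductionOn' a x (fun k _ ↦ succ k)
    fun k _ y ↦ pred (k - 1) (cast (congrArg T (by lia)) y)
  refine ⟨t, Int.inductionOn'_self, fun n ↦ ?_⟩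
  obtain hn | hn := le_or_gt a n
  · have : t (n + 1) = succ n (t n) := Int.inductionOn'_add_one hn
    exact this ▸ hsucc n _
  · obtain ⟨m, rfl⟩ : ∃ m, n = m - 1 := ⟨n + 1, by lia⟩
    have : t (m - 1) = pred (m - 1) (cast (congrArg T (by lia)) (t m)) :=
      Int.inductionOn'_sub_one (by lia)
    rw [this]
    convert hpred (m - 1) _
    exact eq_of_heq ((congr_arg_heq t (by lia)).trans (cast_heq _ _).symm)

variable {E : ExactStructure 𝒜}

/-! ### Exact categories -/

namespace ExactStructure.conflation

variable {X Y Z T : 𝒜} {i : X ⟶ Y} {d : Y ⟶ Z}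

lemma mono (h : E.conflation i d) : Mono i :=
  have ⟨l⟩ := E.isKernel h
  mono_of_isLimit_fork l

lemma epi (h : E.conflation i d) : Epi d :=
  have ⟨l⟩ := E.isCokernel h
  epi_of_isColimit_cofork l

lemma isInflation (h : E.conflation i d) : IsInflation E i := ⟨_, _, h⟩

lemma isDeflation (h : E.conflation i d) : IsDeflation E d := ⟨_, _, h⟩

lemma exists_lift (h : E.conflation i d) (t : T ⟶ Y) (ht : t ≫ d = 0) : ∃ s : T ⟶ X, s ≫ i = t :=
  have ⟨l⟩ := E.isKernel h
  ⟨_, (KernelFork.IsLimit.lift' l t ht).2⟩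

lemma exists_desc (h : E.conflation i d) (t : Y ⟶ T) (ht : i ≫ t = 0) : ∃ s : Z ⟶ T, d ≫ s = t :=
  have ⟨l⟩ := E.isCokernel h
  ⟨_, (CokernelCofork.IsColimit.desc' l t ht).2⟩

end ExactStructure.conflation

section Recognition

variable {X Y Z : 𝒜} {i : X ⟶ Y} {d : Y ⟶ Z}

lemma IsDeflation.conflation (hd : IsDeflation E d) [Mono i] (w : i ≫ d = 0)
    (hi : ∀ {T : 𝒜} (t : T ⟶ Y), t ≫ d = 0 → ∃ s : T ⟶ X, s ≫ i = t) : E.conflation i d := by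
  obtain ⟨K, k, hk⟩ := hd
  have := hk.mono
  obtain ⟨a, ha⟩ := hk.exists_lift i w
  obtain ⟨b, hb⟩ := hi k (E.comp_zero hk)
  exact E.conflation_iso
    ⟨b, a, by simp [← cancel_mono k, ha, hb], by simp [← cancel_mono i, ha, hb]⟩
    (Iso.refl Y) (Iso.refl Z) hk (by simp [hb]) (by simp)

lemma IsInflation.conflation (hi : IsInflation E i) [Epi d] (w : i ≫ d = 0)
    (hd : ∀ {T : 𝒜} (t : Y ⟶ T), i ≫ t = 0 → ∃ s : Z ⟶ T, d ≫ s = t) : E.conflation i d := by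
  obtain ⟨Q, q, hq⟩ := hi
  have := hq.epi
  obtain ⟨a, ha⟩ := hq.exists_desc d w
  obtain ⟨b, hb⟩ := hd q (E.comp_zero hq)
  exact E.conflation_iso (Iso.refl X) (Iso.refl Y)
    ⟨a, b, by simp [← cancel_epi q, reassoc_of% ha, hb],
      by simp [← cancel_epi d, reassoc_of% hb, ha]⟩ hq (by simp) (by simp [ha])

end Recognition

section Stability

variable {P X Y Z K : 𝒜} {fst : P ⟶ X} {snd : P ⟶ Y} {f : X ⟶ Z} {g : Y ⟶ Z}

lemma IsDeflation.comp {d : X ⟶ Y} {d' : Y ⟶ Z} (h : IsDeflation E d) (h' : IsDeflation E d') :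
    IsDeflation E (d ≫ d') :=
  have ⟨_, _, h⟩ := h
  have ⟨_, _, h'⟩ := h'
  E.deflation_comp h h'

lemma IsDeflation.of_isPullback (hp : IsPullback fst snd f g) (hf : IsDeflation E f) :
    IsDeflation E snd := by
  obtain ⟨_, _, hf⟩ := hf
  obtain ⟨Y', f', d', K, k, hp', hk⟩ := E.pullback_deflation hf g
  exact ⟨K, k ≫ (hp'.isoIsPullback _ _ hp).hom, E.conflation_iso (Iso.refl _)
    (hp'.isoIsPullback _ _ hp) (Iso.refl _) hk (by simp) (by simp)⟩

lemma ExactStructure.conflation.of_isPullback {k : K ⟶ X} (hf : E.conflation k f)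
    (hp : IsPullback fst snd f g) :
    ∃ j : K ⟶ P, j ≫ fst = k ∧ E.conflation j snd := by
  have := hf.mono
  let j := hp.lift k 0 (by simp [E.comp_zero hf])
  have hj : j ≫ fst = k := hp.lift_fst ..
  have : Mono j := mono_of_mono_fac hj
  refine ⟨j, hj, (hf.isDeflation.of_isPullback hp).conflation (hp.lift_snd ..) fun t ht ↦ ?_⟩
  obtain ⟨s, hs⟩ := hf.exists_lift (t ≫ fst) (by simp [hp.w, reassoc_of% ht])
  exact ⟨s, hp.hom_ext (by simp [hj, hs]) (by simp [j, ht])⟩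

end Stability

lemma IsInflation.of_isPushout {P X Y Z : 𝒜} {f : Z ⟶ X} {g : Z ⟶ Y} {inl : X ⟶ P}
    {inr : Y ⟶ P} (hp : IsPushout f g inl inr) (hf : IsInflation E f) : IsInflation E inr := by
  obtain ⟨_, _, hf⟩ := hf
  obtain ⟨Y', f', d', Q, q, hp', hk⟩ := E.pushout_inflation hf g
  exact ⟨Q, (hp'.isoIsPushout _ _ hp).inv ≫ q, E.conflation_iso (Iso.refl _)
    (hp'.isoIsPushout _ _ hp) (Iso.refl _) hk (by simp) (by simp)⟩

lemma ExactStructure.conflation.of_isPushout {P X Y Z Q : 𝒜} {f : Z ⟶ X} {g : Z ⟶ Y}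
    {inl : X ⟶ P} {inr : Y ⟶ P} {q : X ⟶ Q} (hf : E.conflation f q)
    (hp : IsPushout f g inl inr) : ∃ c : P ⟶ Q, inl ≫ c = q ∧ E.conflation inr c := by
  have := hf.epi
  let c := hp.desc q 0 (by simp [E.comp_zero hf])
  have hc : inl ≫ c = q := hp.inl_desc ..
  have : Epi c := epi_of_epi_fac hc
  refine ⟨c, hc, (hf.isInflation.of_isPushout hp).conflation (hp.inr_desc ..) fun t ht ↦ ?_⟩
  obtain ⟨s, hs⟩ := hf.exists_desc (inl ≫ t) (by simp [hp.w_assoc, ht])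
  exact ⟨s, hp.hom_ext (by simp [reassoc_of% hc, hs]) (by simp [c, ht])⟩

section Split

lemma IsDeflation.id (X : 𝒜) : IsDeflation E (𝟙 X) := ⟨_, _, E.id_deflation X⟩

lemma conflation_id_zero (X : 𝒜) : E.conflation (𝟙 X) (0 : X ⟶ 0) := by
  have h : IsInflation E (𝟙 (0 : 𝒜)) := ⟨0, 𝟙 0, by simpa using E.id_deflation (0 : 𝒜)⟩
  have : Epi (0 : X ⟶ 0) := ⟨fun _ _ _ ↦ (isZero_zero 𝒜).eq_of_src _ _⟩
  have hp : IsPushout (𝟙 (0 : 𝒜)) (0 : 0 ⟶ X) (0 : 0 ⟶ X) (𝟙 X) := .of_horiz_isIso ⟨by simp⟩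
  exact (h.of_isPushout hp).conflation (by simp) fun t ht ↦ ⟨0, by simpa using ht.symm⟩

lemma conflation_inl_snd (X Y : 𝒜) : E.conflation (biprod.inl : X ⟶ X ⊞ Y) biprod.snd := by
  have hp : IsPullback (biprod.fst : X ⊞ Y ⟶ X) biprod.snd (0 : X ⟶ 0) (0 : Y ⟶ 0) :=
    ⟨⟨by simp⟩, ⟨PullbackCone.IsLimit.mk _ (fun s ↦ biprod.lift s.fst s.snd) (by simp) (by simp)
      (fun s m h₁ h₂ ↦ by ext <;> simp [h₁, h₂])⟩⟩
  exact ((conflation_id_zero X).isDeflation.of_isPullback hp).conflation (by simp)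
    fun t ht ↦ ⟨t ≫ biprod.fst, by ext <;> simp [ht]⟩

lemma IsDeflation.biprod_id_map {X Y : 𝒜} {d : X ⟶ Y} (hd : IsDeflation E d) (T : 𝒜) :
    IsDeflation E (biprod.map (𝟙 T) d) := by
  refine hd.of_isPullback (fst := biprod.snd) (g := biprod.snd)
    ⟨⟨by simp⟩, ⟨PullbackCone.IsLimit.mk _ (fun s ↦ biprod.lift (s.snd ≫ biprod.fst) s.fst)
      (by simp) (fun s ↦ ?_) (fun s m h₁ h₂ ↦ ?_)⟩⟩
  · ext <;> simp [s.condition]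
  · ext
    · simp [← h₂]
    · simp [h₁]

end Split

namespace ExactStructure.conflation

lemma isDeflation_biprod_desc {M N Z R : 𝒜} {i : M ⟶ N} {c : N ⟶ Z} (h : E.conflation i c)
    (e : R ⟶ N) (he : IsDeflation E (e ≫ c)) : IsDeflation E (biprod.desc e i) := by
  have := h.mono
  have hlift (s : PullbackCone (e ≫ c) c) : ∃ l : s.pt ⟶ M, l ≫ i = s.snd - s.fst ≫ e :=
    h.exists_lift _ (by simp [Preadditive.sub_comp, ← s.condition])
  choose l hl using hlift
  refine he.of_isPullback (fst := biprod.fst) (g := c)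
    ⟨⟨by ext <;> simp [E.comp_zero h]⟩, ⟨PullbackCone.IsLimit.mk _
      (fun s ↦ biprod.lift s.fst (l s)) (by simp) (fun s ↦ by simp [biprod.lift_desc, hl])
      (fun s m h₁ h₂ ↦ ?_)⟩⟩
  ext
  · simpa using h₁
  · rw [← cancel_mono i, biprod.lift_snd, hl, ← h₂, ← h₁, biprod.desc_eq]
    simp

lemma isDeflation_biprod_desc_comp {M N Z R S : 𝒜} {i : M ⟶ N} {c : N ⟶ Z}
    (h : E.conflation i c) {e : R ⟶ N} (he : IsDeflation E (e ≫ c)) {q : S ⟶ M}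
    (hq : IsDeflation E q) : IsDeflation E (biprod.desc e (q ≫ i)) := by
  have hdesc : biprod.desc e (q ≫ i) = biprod.map (𝟙 R) q ≫ biprod.desc e i := by ext <;> simp
  rw [hdesc]
  exact (hq.biprod_id_map R).comp (h.isDeflation_biprod_desc e he)

lemma biprod_desc_comp {K M P N Z : 𝒜} {k : K ⟶ P} {d : P ⟶ N} (hd : E.conflation k d)
    {i : M ⟶ N} {c : N ⟶ Z} (hc : E.conflation i c) (m : M ⟶ P) (hm : m ≫ d = i) :
    E.conflation (biprod.desc k m) (d ≫ c) := by
  have := hd.mono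
  have := hc.mono
  have : Mono (biprod.desc k m) := Preadditive.mono_of_cancel_zero _ fun t ht ↦ by
    have hsnd : t ≫ biprod.snd = 0 := by
      simpa [biprod.desc_eq, E.comp_zero hd, hm, ← cancel_mono i] using ht =≫ d
    ext
    · simpa [biprod.desc_eq, reassoc_of% hsnd, ← cancel_mono k] using ht
    · simpa using hsnd
  refine (hd.isDeflation.comp hc.isDeflation).conflation
    (by ext <;> simp [reassoc_of% (E.comp_zero hd), reassoc_of% hm, E.comp_zero hc])
    fun t ht ↦ ?_
  obtain ⟨s, hs⟩ := hc.exists_lift (t ≫ d) (by simpa using ht)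
  obtain ⟨r, hr⟩ := hd.exists_lift (t - s ≫ m) (by simp [Preadditive.sub_comp, hm, hs])
  exact ⟨biprod.lift r s, by simp [biprod.lift_desc, hr]⟩

lemma units_smul {X Y Z : 𝒜} {i : X ⟶ Y} {d : Y ⟶ Z} (h : E.conflation i d) (a : ℤˣ) :
    E.conflation i (a • d) :=
  E.conflation_iso (Iso.refl X) (Iso.refl Y)
    ⟨a • 𝟙 Z, a • 𝟙 Z, by simp [smul_smul, ← pow_two], by simp [smul_smul, ← pow_two]⟩
    h (by simp) (by simp)

end ExactStructure.conflation

/-! ### Model structures -/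

variable {C F W : MorphismProperty 𝒜}

namespace IsModelStructure

variable (h : IsModelStructure C F W)
include h

section

omit [Preadditive 𝒜] [HasZeroObject 𝒜] [HasBinaryBiproducts 𝒜]

lemma weq_id_s18 (A : 𝒜) : W (𝟙 A) := by
  obtain ⟨Z, j, q, -, -, -, hq⟩ := h.fact_right (𝟙 A)
  exact h.weq_cancel_left q (𝟙 A) hq (by simpa using hq)

lemma cof_of_llp {A B : 𝒜} (i : A ⟶ B)
    (hi : ∀ {X Y : 𝒜} (p : X ⟶ Y) (a : A ⟶ X) (b : B ⟶ Y), F p → W p → a ≫ p = i ≫ b →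
      ∃ s : B ⟶ X, i ≫ s = a ∧ s ≫ p = b) : C i := by
  obtain ⟨Z, j, q, rfl, hj, hq, hq'⟩ := h.fact_right i
  obtain ⟨s, hs, hs'⟩ := hi q j (𝟙 B) hq hq' (by simp)
  exact h.retract_cofib _ j ⟨𝟙 A, 𝟙 A, s, q, by simp, hs', by simp [hs], by simp⟩ hj

lemma trivFib_of_rlp {A B : 𝒜} (f : A ⟶ B)
    (hf : ∀ {X Y : 𝒜} (i : X ⟶ Y) (a : X ⟶ A) (b : Y ⟶ B), C i → a ≫ f = i ≫ b →
      ∃ s : Y ⟶ A, i ≫ s = a ∧ s ≫ f = b) : F f ∧ W f := by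
  obtain ⟨Z, j, q, rfl, hj, hq, hq'⟩ := h.fact_right f
  obtain ⟨s, hs, hs'⟩ := hf j (𝟙 A) q hj (by simp)
  have hr : IsRetractMor (j ≫ q) q := ⟨j, s, 𝟙 B, 𝟙 B, hs, by simp, by simp, by simp [hs']⟩
  exact ⟨h.retract_fib _ q hr hq, h.retract_weq _ q hr hq'⟩

lemma cof_comp {X Y Z : 𝒜} {i : X ⟶ Y} {j : Y ⟶ Z} (hi : C i) (hj : C j) : C (i ≫ j) := by
  refine h.cof_of_llp _ fun p a b hp hp' w ↦ ?_
  obtain ⟨s, hs, hs'⟩ := h.lifting_right i p a (j ≫ b) hi hp hp' (by simpa using w)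
  obtain ⟨t, ht, ht'⟩ := h.lifting_right j p s b hj hp hp' hs'
  exact ⟨t, by simp [ht, hs], ht'⟩

end

section

omit [HasBinaryBiproducts 𝒜]

lemma weq_toZero_iff (A : 𝒜) : W (0 : A ⟶ 0) ↔ TrivialObj W A := by
  have hid : W ((0 : (0 : 𝒜) ⟶ A) ≫ (0 : A ⟶ 0)) := by simpa using h.weq_id_s18 (0 : 𝒜)
  exact ⟨fun hA ↦ h.weq_cancel_right _ _ hA hid, fun hA ↦ h.weq_cancel_left _ _ hA hid⟩

lemma trivialObj_iff_of_weq {A B : 𝒜} {f : A ⟶ B} (hf : W f) :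
    TrivialObj W A ↔ TrivialObj W B := by
  have hw : (0 : (0 : 𝒜) ⟶ A) ≫ f = 0 := by simp
  constructor
  · intro hA
    simpa only [TrivialObj, hw] using h.weq_comp _ _ hA hf
  · intro hB
    exact h.weq_cancel_right _ _ hf (by rwa [hw])

lemma cofibrant_of_retract {A B : 𝒜} (i : A ⟶ B) (r : B ⟶ A) (hr : i ≫ r = 𝟙 A)
    (hB : Cofibrant C B) : Cofibrant C A :=
  h.retract_cofib _ _ ⟨𝟙 _, 𝟙 _, i, r, by simp, hr, by simp, by simp⟩ hB

lemma trivialObj_of_retract {A B : 𝒜} (i : A ⟶ B) (r : B ⟶ A) (hr : i ≫ r = 𝟙 A)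
    (hB : TrivialObj W B) : TrivialObj W A :=
  h.retract_weq _ _ ⟨𝟙 _, 𝟙 _, i, r, by simp, hr, by simp, by simp⟩ hB

lemma exists_cofibrant_replacement (X : 𝒜) :
    ∃ (Q : 𝒜) (q : Q ⟶ X), Cofibrant C Q ∧ F q ∧ W q := by
  obtain ⟨Q, j, q, -, hj, hq⟩ := h.fact_right (0 : (0 : 𝒜) ⟶ X)
  obtain rfl : j = 0 := (isZero_zero 𝒜).eq_of_src _ _
  exact ⟨Q, q, hj, hq⟩

lemma exists_lift_of_cofibrant {X A B : 𝒜} (hX : Cofibrant C X) {p : A ⟶ B} (hp : F p)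
    (hp' : W p) (g : X ⟶ B) : ∃ s : X ⟶ A, s ≫ p = g :=
  have ⟨s, _, hs⟩ := h.lifting_right (0 : (0 : 𝒜) ⟶ X) p 0 g hX hp hp' (by simp)
  ⟨s, hs⟩

lemma exists_extension_of_cof {M N K : 𝒜} {i : M ⟶ N} (hi : C i) (hK : Fibrant F K)
    (hK' : TrivialObj W K) (a : M ⟶ K) : ∃ b : N ⟶ K, i ≫ b = a :=
  have ⟨s, hs, _⟩ :=
    h.lifting_right i (0 : K ⟶ 0) a 0 hi hK ((h.weq_toZero_iff K).2 hK') (by simp)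
  ⟨s, hs⟩

end

lemma trivialObj_kernel {K A B : 𝒜} {k : K ⟶ A} {f : A ⟶ B} (hk : E.conflation k f) (hf : F f)
    (hf' : W f) : TrivialObj W K := by
  have := hk.mono
  refine (h.weq_toZero_iff K).1 (h.trivFib_of_rlp _ fun i a b hi _ ↦ ?_).2
  obtain ⟨s, hs, hs'⟩ := h.lifting_right i f (a ≫ k) 0 hi hf hf' (by simp [E.comp_zero hk])
  obtain ⟨t, ht⟩ := hk.exists_lift s hs'
  exact ⟨t, by simp [← cancel_mono k, ht, hs], (isZero_zero 𝒜).eq_of_tgt _ _⟩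

end IsModelStructure

namespace IsExactModelStr

variable (h : IsExactModelStr E C F W)
include h

lemma isModelStructure : IsModelStructure C F W := h.1

lemma cof_of_conflation {A B Z : 𝒜} {i : A ⟶ B} {d : B ⟶ Z} (hi : E.conflation i d)
    (hZ : Cofibrant C Z) : C i := (h.2.1 i).2 ⟨Z, d, hi, hZ⟩

lemma cofibrant_of_extension {X Y Z : 𝒜} {i : X ⟶ Y} {d : Y ⟶ Z} (hi : E.conflation i d)
    (hX : Cofibrant C X) (hZ : Cofibrant C Z) : Cofibrant C Y := by
  simpa [Cofibrant] using h.isModelStructure.cof_comp hX (h.cof_of_conflation hi hZ)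

-- Pull the lifting problem back to `d : P ⟶ N`; the sections of `d` extending `m` are obtained
-- from an extension to `P` of the projection of the subobject `K ⊞ M` onto `K`.
lemma trivFib_of_conflation {K A B : 𝒜} {k : K ⟶ A} {f : A ⟶ B} (hk : E.conflation k f)
    (hK : Fibrant F K) (hK' : TrivialObj W K) : F f ∧ W f := by
  refine h.isModelStructure.trivFib_of_rlp _ fun {M N} i a b hi w ↦ ?_
  obtain ⟨Z, c, hc, hZ⟩ := (h.2.1 i).1 hi
  obtain ⟨P, p, d, -, -, hp, -⟩ := E.pullback_deflation hk b
  obtain ⟨k', -, hk'⟩ := hk.of_isPullback hp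
  have := hk'.epi
  obtain ⟨m, hmp, hmd⟩ : ∃ m : M ⟶ P, m ≫ p = a ∧ m ≫ d = i :=
    ⟨hp.lift a i w, hp.lift_fst .., hp.lift_snd ..⟩
  obtain ⟨ρ, hρ⟩ := h.isModelStructure.exists_extension_of_cof
    (h.cof_of_conflation (hk'.biprod_desc_comp hc m hmd) hZ) hK hK' (biprod.desc (𝟙 K) 0)
  have hρk : k' ≫ ρ = 𝟙 K := by simpa using biprod.inl ≫= hρ
  have hρm : m ≫ ρ = 0 := by simpa using biprod.inr ≫= hρ
  obtain ⟨σ, hσ⟩ := hk'.exists_desc (𝟙 P - ρ ≫ k') (by simp [reassoc_of% hρk])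
  have hσd : σ ≫ d = 𝟙 N := by
    simp [← cancel_epi d, reassoc_of% hσ, Preadditive.sub_comp, E.comp_zero hk']
  have hσm : i ≫ σ = m := by simp [← hmd, hσ, reassoc_of% hρm]
  exact ⟨σ ≫ p, by simp [reassoc_of% hσm, hmp], by simp [hp.w, reassoc_of% hσd]⟩

lemma trivFibs : TrivFibsAreDeflWithTrivFibKer E F W := by
  refine fun f ↦ ⟨fun ⟨hf, hf'⟩ ↦ ?_, fun ⟨K, k, hk, hK, hK'⟩ ↦ h.trivFib_of_conflation hk hK hK'⟩
  obtain ⟨K, k, hk, hK⟩ := (h.2.2 f).1 hf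
  exact ⟨K, k, hk, hK, h.isModelStructure.trivialObj_kernel hk hf hf'⟩

end IsExactModelStr

lemma isExactModelStr_and_isWeaklyProjModelStr_iff :
    (IsExactModelStr E C F W ∧ IsWeaklyProjModelStr E C F W) ↔ IsProjectiveModelStr E C F W :=
  ⟨fun h ↦ ⟨h.1, h.2.2.1⟩, fun h ↦ ⟨h.1, h.1.1, h.2, h.1.2.1, h.1.trivFibs⟩⟩

/-! ### Projective objects -/

namespace IsProjObj

lemma zero : IsProjObj E (0 : 𝒜) := fun _ _ _ ↦ ⟨0, (isZero_zero 𝒜).eq_of_src _ _⟩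

lemma biprod {P Q : 𝒜} (hP : IsProjObj E P) (hQ : IsProjObj E Q) : IsProjObj E (P ⊞ Q) := by
  intro X Y d hd g
  obtain ⟨a, ha⟩ := hP d hd (biprod.inl ≫ g)
  obtain ⟨b, hb⟩ := hQ d hd (biprod.inr ≫ g)
  exact ⟨biprod.desc a b, by ext <;> simp [ha, hb]⟩

lemma of_iso {P Q : 𝒜} (e : P ≅ Q) (hP : IsProjObj E P) : IsProjObj E Q := by
  intro X Y d hd g
  obtain ⟨a, ha⟩ := hP d hd (e.hom ≫ g)
  exact ⟨e.inv ≫ a, by simp [ha]⟩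

end IsProjObj

namespace IsProjectiveModelStr

variable (h : IsProjectiveModelStr E C F W)
include h

lemma isModelStructure : IsModelStructure C F W := h.1.1

lemma fib_iff {A B : 𝒜} {f : A ⟶ B} : F f ↔ IsDeflation E f := by
  rw [h.1.2.2 f]
  exact ⟨fun ⟨K, k, hk, _⟩ ↦ ⟨K, k, hk⟩, fun ⟨K, k, hk⟩ ↦ ⟨K, k, hk, h.2 K⟩⟩

-- `g` is a retract of the deflation `(g, e ≫ g) : Y ⊞ X ⟶ Z`.
lemma isDeflation_of_comp {X Y Z : 𝒜} (e : X ⟶ Y) (g : Y ⟶ Z) (heg : IsDeflation E (e ≫ g)) :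
    IsDeflation E g := by
  have hdesc : IsDeflation E (biprod.desc g (e ≫ g)) := by
    simpa using (conflation_id_zero Z).isDeflation_biprod_desc_comp (e := g)
      (by simpa using (conflation_id_zero Y).isDeflation) heg
  exact h.fib_iff.1 (h.isModelStructure.retract_fib g (biprod.desc g (e ≫ g))
    ⟨biprod.inl, biprod.desc (𝟙 Y) e, 𝟙 Z, 𝟙 Z, by simp, by simp, by simp, by ext <;> simp⟩
    (h.fib_iff.2 hdesc))

lemma isProjObj_of_cofibrant_of_trivialObj {P : 𝒜} (hP : Cofibrant C P) (hP' : TrivialObj W P) :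
    IsProjObj E P := by
  intro A B d hd g
  obtain ⟨s, -, hs⟩ := h.isModelStructure.lifting_left (0 : (0 : 𝒜) ⟶ P) d 0 g hP hP'
    (h.fib_iff.2 hd) (by simp)
  exact ⟨s, hs⟩

lemma exists_deflation_from_cofibrant_trivialObj (X : 𝒜) :
    ∃ (P : 𝒜) (e : P ⟶ X), Cofibrant C P ∧ TrivialObj W P ∧ IsDeflation E e := by
  obtain ⟨P, i, e, -, hi, hi', he⟩ := h.isModelStructure.fact_left (0 : (0 : 𝒜) ⟶ X)
  obtain rfl : i = 0 := (isZero_zero 𝒜).eq_of_src _ _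
  exact ⟨P, e, hi, hi', h.fib_iff.1 he⟩

lemma isProjObj_iff {P : 𝒜} : IsProjObj E P ↔ Cofibrant C P ∧ TrivialObj W P := by
  refine ⟨fun hP ↦ ?_, fun hP ↦ h.isProjObj_of_cofibrant_of_trivialObj hP.1 hP.2⟩
  obtain ⟨Q, e, hQ, hQ', he⟩ := h.exists_deflation_from_cofibrant_trivialObj P
  obtain ⟨s, hs⟩ := hP e he (𝟙 P)
  exact ⟨h.isModelStructure.cofibrant_of_retract s e hs hQ,
    h.isModelStructure.trivialObj_of_retract s e hs hQ'⟩

lemma hasEnoughProj : HasEnoughProj E := fun X ↦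
  have ⟨P, e, hP, hP', he⟩ := h.exists_deflation_from_cofibrant_trivialObj X
  ⟨P, e, h.isProjObj_iff.2 ⟨hP, hP'⟩, he⟩

lemma trivFib_of_conflation {K A B : 𝒜} {k : K ⟶ A} {f : A ⟶ B} (hk : E.conflation k f)
    (hK : TrivialObj W K) : F f ∧ W f := h.1.trivFib_of_conflation hk (h.2 K) hK

lemma exists_conflation_to_projective {X : 𝒜} (hX : Cofibrant C X) :
    ∃ (P X' : 𝒜) (i : X ⟶ P) (p : P ⟶ X'),
      E.conflation i p ∧ IsProjObj E P ∧ Cofibrant C X' := by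
  obtain ⟨P, i, q, -, hi, -, hq⟩ := h.isModelStructure.fact_right (0 : X ⟶ 0)
  obtain ⟨X', p, hp, hX'⟩ := (h.1.2.1 i).1 hi
  obtain rfl : q = 0 := (isZero_zero 𝒜).eq_of_tgt _ _
  exact ⟨P, X', i, p, hp, h.isProjObj_iff.2 ⟨h.1.cofibrant_of_extension hp hX hX',
    (h.isModelStructure.weq_toZero_iff P).1 hq⟩, hX'⟩

lemma conflation_of_isPushout {X Y I P Z K : 𝒜} {j : X ⟶ I} {q : X ⟶ Y} {g : I ⟶ P}
    {j' : Y ⟶ P} {p : I ⟶ Z} {k : K ⟶ X} (hpo : IsPushout j q g j') (hj : E.conflation j p)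
    (hk : E.conflation k q) : E.conflation (k ≫ j) g := by
  obtain ⟨c, hgc, hj'⟩ := hj.of_isPushout hpo
  have := hj.mono
  have := hk.mono
  have := hj'.mono
  have hdesc : biprod.desc g (q ≫ j') = biprod.desc (𝟙 I) j ≫ g := by
    ext <;> simp [hpo.w]
  have hg : IsDeflation E g := by
    refine h.isDeflation_of_comp (biprod.desc (𝟙 I) j) g ?_
    rw [← hdesc]
    exact hj'.isDeflation_biprod_desc_comp (by simpa only [hgc] using hj.isDeflation)
      hk.isDeflation
  refine hg.conflation (by simp [hpo.w, reassoc_of% (E.comp_zero hk)]) fun t ht ↦ ?_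
  obtain ⟨x, rfl⟩ := hj.exists_lift t (by simp [← hgc, reassoc_of% ht])
  obtain ⟨y, rfl⟩ := hk.exists_lift x (by simpa [← cancel_mono j', ← hpo.w] using ht)
  exact ⟨y, by simp⟩

lemma exists_extension {X Y Z T : 𝒜} {i : X ⟶ Y} {d : Y ⟶ Z} (hi : E.conflation i d)
    (hZ : Cofibrant C Z) (hT : TrivialObj W T) (a : X ⟶ T) : ∃ b : Y ⟶ T, i ≫ b = a :=
  h.isModelStructure.exists_extension_of_cof (h.1.cof_of_conflation hi hZ) (h.2 T) hT a

-- A cofibrant replacement `q : Q ⟶ Ω` splits: pushing an inflation `Q ⟶ I` into a projective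
-- out along `q` gives a trivial object `T`, so `Ω ⟶ T` extends along the cofibration `Ω ⟶ P`,
-- and the extension lifts to `I` because `P` is projective.
lemma cofibrant_of_conflation {Ω P X : 𝒜} {o : Ω ⟶ P} {d : P ⟶ X} (ho : E.conflation o d)
    (hP : IsProjObj E P) (hX : Cofibrant C X) : Cofibrant C Ω := by
  obtain ⟨Q, q, hQ, hq, hq'⟩ := h.isModelStructure.exists_cofibrant_replacement Ω
  obtain ⟨K, k, hk⟩ := h.fib_iff.1 hq
  obtain ⟨I, Q', j, p, hj, hI, -⟩ := h.exists_conflation_to_projective hQ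
  obtain ⟨T, g, j', -, -, hpo, -⟩ := E.pushout_inflation hj q
  obtain ⟨c, hgc, hj'⟩ := hj.of_isPushout hpo
  have hg := h.conflation_of_isPushout hpo hj hk
  have hT : TrivialObj W T := (h.isModelStructure.trivialObj_iff_of_weq (h.trivFib_of_conflation hg
    (h.isModelStructure.trivialObj_kernel hk hq hq')).2).1 (h.isProjObj_iff.1 hI).2
  obtain ⟨r, hr⟩ := h.exists_extension ho hX hT j'
  obtain ⟨r', hr'⟩ := hP g hg.isDeflation r
  obtain ⟨s, hs⟩ := hj.exists_lift (o ≫ r') (by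
    simp [← hgc, reassoc_of% hr', reassoc_of% hr, E.comp_zero hj'])
  have := hj'.mono
  exact h.isModelStructure.cofibrant_of_retract s q
    (by simp [← cancel_mono j', ← hpo.w, reassoc_of% hs, hr', hr]) hQ

lemma exists_conflation_from_projective {X : 𝒜} (hX : Cofibrant C X) :
    ∃ (P X' : 𝒜) (i : X' ⟶ P) (p : P ⟶ X),
      E.conflation i p ∧ IsProjObj E P ∧ Cofibrant C X' := by
  obtain ⟨P, p, hP, X', i, hi⟩ := h.hasEnoughProj X
  exact ⟨P, X', i, p, hi, hP, h.cofibrant_of_conflation hi hP hX⟩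

end IsProjectiveModelStr

/-! ### The stable category -/

/-- Stable equivalence of morphisms: the difference factors through a projective object. The
quotient of `𝒜` by this relation is the stable category of the exact category. -/
def StableEq (E : ExactStructure 𝒜) : HomRel 𝒜 := fun X Y f g ↦
  ∃ (P : 𝒜) (a : X ⟶ P) (b : P ⟶ Y), IsProjObj E P ∧ f - g = a ≫ b

instance : Congruence (StableEq E) where
  equivalence.refl f := ⟨0, 0, 0, IsProjObj.zero, by simp⟩
  equivalence.symm := by
    rintro f g ⟨P, a, b, hP, hab⟩
    exact ⟨P, -a, b, hP, by rw [Preadditive.neg_comp, ← hab, neg_sub]⟩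
  equivalence.trans := by
    rintro f g k ⟨P, a, b, hP, hab⟩ ⟨Q, c, d, hQ, hcd⟩
    exact ⟨P ⊞ Q, biprod.lift a c, biprod.desc b d, hP.biprod hQ, by
      rw [biprod.lift_desc, ← hab, ← hcd, sub_add_sub_cancel]⟩
  comp_left k f g := by
    rintro ⟨P, a, b, hP, hab⟩
    exact ⟨P, k ≫ a, b, hP, by rw [← Preadditive.comp_sub, hab, Category.assoc]⟩
  comp_right k := by
    rintro ⟨P, a, b, hP, hab⟩
    exact ⟨P, a, b ≫ k, hP, by rw [← Preadditive.sub_comp, hab, Category.assoc]⟩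

namespace IsProjectiveModelStr

variable (h : IsProjectiveModelStr E C F W)
include h

-- `f` and `g` are compositions of morphisms through `P ⊞ X`, whose projection to `X` is a weak
-- equivalence equalizing the first factors.
lemma map_Q_eq_of_stableEq {X Y : 𝒜} {f g : X ⟶ Y} (hfg : StableEq E f g) :
    W.Q.map f = W.Q.map g := by
  obtain ⟨P, a, b, hP, hab⟩ := hfg
  have hsnd : W (biprod.snd : P ⊞ X ⟶ X) :=
    (h.trivFib_of_conflation (conflation_inl_snd P X) (h.isProjObj_iff.1 hP).2).2
  have := Localization.inverts W.Q W _ hsnd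
  have hlift : W.Q.map (biprod.lift a (𝟙 X)) = W.Q.map (biprod.lift 0 (𝟙 X)) := by
    simp [← cancel_mono (W.Q.map (biprod.snd : P ⊞ X ⟶ X)), ← Functor.map_comp]
  have hf : f = biprod.lift a (𝟙 X) ≫ biprod.desc b g := by simp [biprod.lift_desc, ← hab]
  have hg : g = biprod.lift 0 (𝟙 X) ≫ biprod.desc b g := by simp
  calc W.Q.map f = W.Q.map (biprod.lift 0 (𝟙 X)) ≫ W.Q.map (biprod.desc b g) := by
        rw [hf, Functor.map_comp, hlift]
    _ = W.Q.map g := by rw [← Functor.map_comp, ← hg]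

-- A trivial cofibration is a section of a trivial fibration.
lemma isInvertedBy_of_trivFib {D : Type*} [Category* D] (Φ : 𝒜 ⥤ D)
    (hΦ : ∀ {A B : 𝒜} (p : A ⟶ B), F p → W p → IsIso (Φ.map p)) : W.IsInvertedBy Φ := by
  intro A B w hw
  obtain ⟨Z, i, p, rfl, hi, hi', hp⟩ := h.isModelStructure.fact_left w
  obtain ⟨r, hr, -⟩ := h.isModelStructure.lifting_left i (0 : A ⟶ 0) (𝟙 A) 0 hi hi' (h.2 A)
    (by simp)
  have hrF : F r := h.fib_iff.2 (h.isDeflation_of_comp i r (by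
    simpa [hr] using (IsDeflation.id A : IsDeflation E (𝟙 A))))
  have hrW : W r := h.isModelStructure.weq_cancel_left i r hi'
    (by simpa [hr] using h.isModelStructure.weq_id_s18 A)
  have := hΦ r hrF hrW
  have := hΦ p hp (h.isModelStructure.weq_cancel_left i p hi' hw)
  have : IsIso (Φ.map i ≫ Φ.map r) := by
    rw [← Functor.map_comp, hr]
    infer_instance
  have := IsIso.of_isIso_comp_right (Φ.map i) (Φ.map r)
  rw [Functor.map_comp]
  infer_instance

lemma exists_factor_projective {X K : 𝒜} (hX : Cofibrant C X) (hK : TrivialObj W K)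
    (f : X ⟶ K) : ∃ (P : 𝒜) (a : X ⟶ P) (b : P ⟶ K), IsProjObj E P ∧ a ≫ b = f := by
  obtain ⟨P, q, hP, hq, hq'⟩ := h.isModelStructure.exists_cofibrant_replacement K
  obtain ⟨s, hs⟩ := h.isModelStructure.exists_lift_of_cofibrant hX hq hq' f
  exact ⟨P, s, q, h.isProjObj_of_cofibrant_of_trivialObj hP
    ((h.isModelStructure.trivialObj_iff_of_weq hq').2 hK), hs⟩

lemma stableEq_of_comp {X A B : 𝒜} (hX : Cofibrant C X) {p : A ⟶ B} (hp : F p) (hp' : W p)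
    {f g : X ⟶ A} (hfg : StableEq E (f ≫ p) (g ≫ p)) : StableEq E f g := by
  obtain ⟨P, a, b, hP, hab⟩ := hfg
  obtain ⟨K, k, hk⟩ := h.fib_iff.1 hp
  obtain ⟨b', rfl⟩ := hP p hk.isDeflation b
  obtain ⟨t, ht⟩ := hk.exists_lift (f - g - a ≫ b') (by
    simp [Preadditive.sub_comp, ← hab])
  obtain ⟨Q, c, d, hQ, rfl⟩ :=
    h.exists_factor_projective hX (h.isModelStructure.trivialObj_kernel hk hp hp') t
  exact ⟨P ⊞ Q, biprod.lift a c, biprod.desc b' (d ≫ k), hP.biprod hQ, by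
    rw [biprod.lift_desc, ← Category.assoc c, ht, add_sub_cancel]⟩

lemma isInvertedBy_stableHom {X : 𝒜} (hX : Cofibrant C X) :
    W.IsInvertedBy (CategoryTheory.Quotient.functor (StableEq E) ⋙
      coyoneda.obj (.op ((CategoryTheory.Quotient.functor (StableEq E)).obj X))) := by
  refine h.isInvertedBy_of_trivFib _ fun {A B} p hp hp' ↦ (isIso_iff_bijective _).2 ⟨?_, ?_⟩
  · intro f g hfg
    obtain ⟨f, rfl⟩ := (CategoryTheory.Quotient.functor (StableEq E)).map_surjective f
    obtain ⟨g, rfl⟩ := (CategoryTheory.Quotient.functor (StableEq E)).map_surjective g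
    refine (CategoryTheory.Quotient.functor_map_eq_iff _ _ _).2 (h.stableEq_of_comp hX hp hp' ?_)
    exact (CategoryTheory.Quotient.functor_map_eq_iff _ _ _).1 (by simpa using hfg)
  · intro f
    obtain ⟨f, rfl⟩ := (CategoryTheory.Quotient.functor (StableEq E)).map_surjective f
    obtain ⟨s, rfl⟩ := h.isModelStructure.exists_lift_of_cofibrant hX hp hp' f
    exact ⟨(CategoryTheory.Quotient.functor (StableEq E)).map s, by simp⟩

lemma map_Q_eq_iff {X Y : 𝒜} (hX : Cofibrant C X) {f g : X ⟶ Y} :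
    W.Q.map f = W.Q.map g ↔ StableEq E f g := by
  refine ⟨fun hfg ↦ (CategoryTheory.Quotient.functor_map_eq_iff _ _ _).1 ?_, h.map_Q_eq_of_stableEq⟩
  exact map_eq_of_isLocalization_of_isInvertedBy W.Q W (h.isInvertedBy_stableHom hX) hfg

lemma map_Q_surjective {X : 𝒜} (hX : Cofibrant C X) (Y : 𝒜) :
    Function.Surjective (W.Q.map : (X ⟶ Y) → (W.Q.obj X ⟶ W.Q.obj Y)) := by
  let M := CategoryTheory.Quotient.lift (StableEq E) W.Q fun _ _ _ _ ↦ h.map_Q_eq_of_stableEq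
  have : (CategoryTheory.Quotient.functor (StableEq E) ⋙ M).IsLocalization W :=
    inferInstanceAs (W.Q.IsLocalization W)
  intro u
  obtain ⟨f, rfl⟩ := map_surjective_of_isLocalization_of_isInvertedBy (M := M) W
    (h.isInvertedBy_stableHom hX) Y u
  obtain ⟨f, rfl⟩ := (CategoryTheory.Quotient.functor (StableEq E)).map_surjective f
  exact ⟨f, rfl⟩

end IsProjectiveModelStr

/-! ### Acyclic complexes -/

/-- A presentation of a complex `K` as a splicing of conflations: objects of cycles `Z n` and
conflations `Z n ⟶ K.X n ⟶ Z (n + 1)` through which the differential factors. As for the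
differential of a complex, `n + 1` is replaced by an index `m` equal to it, which keeps
transports out of the shifts of `K`. -/
structure AcyclicData (E : ExactStructure 𝒜) (K : CochainComplex 𝒜 ℤ) where
  Z (n : ℤ) : 𝒜
  i (n : ℤ) : Z n ⟶ K.X n
  p (n m : ℤ) (hnm : n + 1 = m) : K.X n ⟶ Z m
  conflation (n m : ℤ) (hnm : n + 1 = m) : E.conflation (i n) (p n m hnm)
  d_eq (n m : ℤ) (hnm : n + 1 = m) : K.d n m = p n m hnm ≫ i m

namespace AcyclicData

variable {K L M : CochainComplex 𝒜 ℤ}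

/-- Acyclic data given by conflations `Z n ⟶ K.X n ⟶ Z (n + 1)`, without auxiliary indices. -/
def ofSucc (Z : ℤ → 𝒜) (i : ∀ n, Z n ⟶ K.X n) (p : ∀ n, K.X n ⟶ Z (n + 1))
    (hip : ∀ n, E.conflation (i n) (p n)) (hd : ∀ n, K.d n (n + 1) = p n ≫ i (n + 1)) :
    AcyclicData E K where
  Z := Z
  i := i
  p n m hnm := p n ≫ eqToHom (by rw [hnm])
  conflation := by
    rintro n _ rfl
    simpa using hip n
  d_eq := by
    rintro n _ rfl
    simpa using hd n

instance (D : AcyclicData E K) (n : ℤ) : Mono (D.i n) := (D.conflation n _ rfl).mono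

instance (D : AcyclicData E K) (n m : ℤ) (hnm : n + 1 = m) : Epi (D.p n m hnm) :=
  (D.conflation n m hnm).epi

lemma i_p (D : AcyclicData E K) (n m : ℤ) (hnm : n + 1 = m) : D.i n ≫ D.p n m hnm = 0 :=
  E.comp_zero (D.conflation n m hnm)

lemma i_d (D : AcyclicData E K) (n m : ℤ) (hnm : n + 1 = m) : D.i n ≫ K.d n m = 0 := by
  simp [D.d_eq n m hnm, reassoc_of% (D.i_p n m hnm)]

lemma d_p (D : AcyclicData E K) (n m k : ℤ) (hnm : n + 1 = m) (hmk : m + 1 = k) :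
    K.d n m ≫ D.p m k hmk = 0 := by
  simp [D.d_eq n m hnm, D.i_p m k hmk]

section CyclesMap

variable (D : AcyclicData E K) (D' : AcyclicData E L) (f : K ⟶ L) (n : ℤ)

lemma exists_cyclesMap : ∃ z : D.Z n ⟶ D'.Z n, z ≫ D'.i n = D.i n ≫ f.f n :=
  (D'.conflation n _ rfl).exists_lift _ (by
    simp [← cancel_mono (D'.i (n + 1)), ← D'.d_eq, reassoc_of% (D.i_d n _ rfl)])

/-- The morphism induced on cycles by a morphism of complexes. -/
noncomputable def cyclesMap : D.Z n ⟶ D'.Z n := (D.exists_cyclesMap D' f n).choose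

lemma cyclesMap_i : D.cyclesMap D' f n ≫ D'.i n = D.i n ≫ f.f n :=
  (D.exists_cyclesMap D' f n).choose_spec

lemma f_p (m : ℤ) (hnm : n + 1 = m) :
    f.f n ≫ D'.p n m hnm = D.p n m hnm ≫ D.cyclesMap D' f m := by
  rw [← cancel_mono (D'.i m), Category.assoc, Category.assoc, cyclesMap_i, ← D'.d_eq, f.comm,
    D.d_eq n m hnm, Category.assoc]

variable {D D' f n} in
lemma cyclesMap_eq {z : D.Z n ⟶ D'.Z n} (hz : D.i n ≫ f.f n = z ≫ D'.i n) :
    D.cyclesMap D' f n = z := by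
  rw [← cancel_mono (D'.i n), cyclesMap_i, hz]

lemma cyclesMap_id : D.cyclesMap D (𝟙 K) n = 𝟙 _ := cyclesMap_eq (by simp)

lemma cyclesMap_comp (D'' : AcyclicData E M) (g : L ⟶ M) :
    D.cyclesMap D'' (f ≫ g) n = D.cyclesMap D' f n ≫ D'.cyclesMap D'' g n :=
  cyclesMap_eq (by
    rw [HomologicalComplex.comp_f, Category.assoc, cyclesMap_i, ← Category.assoc, ← cyclesMap_i,
      Category.assoc])

lemma cyclesMap_sub (g : K ⟶ L) :
    D.cyclesMap D' (f - g) n = D.cyclesMap D' f n - D.cyclesMap D' g n :=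
  cyclesMap_eq (by simp [cyclesMap_i])

/-- The cycles of a complex do not depend on its presentation as a splicing of conflations. -/
noncomputable def cyclesIso (D₁ D₂ : AcyclicData E K) (n : ℤ) : D₁.Z n ≅ D₂.Z n where
  hom := D₁.cyclesMap D₂ (𝟙 K) n
  inv := D₂.cyclesMap D₁ (𝟙 K) n
  hom_inv_id := by rw [← cyclesMap_comp, Category.comp_id, cyclesMap_id]
  inv_hom_id := by rw [← cyclesMap_comp, Category.comp_id, cyclesMap_id]

end CyclesMap

end AcyclicData

/-- The totally acyclic complexes of a projective model structure: acyclic complexes of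
projective objects with cofibrant cycles. -/
def totallyAcyclic (E : ExactStructure 𝒜) (C : MorphismProperty 𝒜) :
    ObjectProperty (CochainComplex 𝒜 ℤ) := fun K ↦
  ∃ D : AcyclicData E K, (∀ n, Cofibrant C (D.Z n)) ∧ ∀ n, IsProjObj E (K.X n)

/-! ### Complexes and morphisms with prescribed cycles -/

namespace IsProjectiveModelStr

variable (h : IsProjectiveModelStr E C F W)
include h

lemma exists_acyclicData {X : 𝒜} (hX : Cofibrant C X) (a : ℤ) :
    ∃ (K : CochainComplex 𝒜 ℤ) (D : AcyclicData E K),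
      (∀ n, Cofibrant C (D.Z n)) ∧ (∀ n, IsProjObj E (K.X n)) ∧ D.Z a = X := by
  obtain ⟨t, ht, hr⟩ := exists_int_seq (T := fun _ ↦ {X : 𝒜 // Cofibrant C X})
    (fun _ X Y ↦ ∃ (P : 𝒜) (i : X.1 ⟶ P) (p : P ⟶ Y.1), E.conflation i p ∧ IsProjObj E P)
    (fun _ X ↦
      have ⟨P, Y, i, p, hip, hP, hY⟩ := h.exists_conflation_to_projective X.2
      ⟨⟨Y, hY⟩, P, i, p, hip, hP⟩)
    (fun _ Y ↦
      have ⟨P, X, i, p, hip, hP, hX⟩ := h.exists_conflation_from_projective Y.2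
      ⟨⟨X, hX⟩, P, i, p, hip, hP⟩) a ⟨X, hX⟩
  choose P i p hip hP using hr
  let K := CochainComplex.of P (fun n ↦ p n ≫ i (n + 1)) fun n ↦ by
    simp [reassoc_of% (E.comp_zero (hip (n + 1)))]
  exact ⟨K, .ofSucc (fun n ↦ (t n).1) i p hip (CochainComplex.of_d P _),
    fun n ↦ (t n).2, hP, congrArg Subtype.val ht⟩

variable {K L : CochainComplex 𝒜 ℤ} {D : AcyclicData E K} {D' : AcyclicData E L}

lemma exists_cyclesMap_eq (hD : ∀ n, Cofibrant C (D.Z n)) (hK : ∀ n, IsProjObj E (K.X n))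
    (hL : ∀ n, IsProjObj E (L.X n)) {a : ℤ} (z : D.Z a ⟶ D'.Z a) :
    ∃ f : K ⟶ L, D.cyclesMap D' f a = z := by
  obtain ⟨t, rfl, hr⟩ := exists_int_seq (T := fun n ↦ D.Z n ⟶ D'.Z n)
    (fun n z z' ↦ ∃ f : K.X n ⟶ L.X n, D.i n ≫ f = z ≫ D'.i n ∧
      f ≫ D'.p n _ rfl = D.p n _ rfl ≫ z')
    (fun n z ↦ by
      obtain ⟨f, hf⟩ := h.exists_extension (D.conflation n _ rfl) (hD _)
        (h.isProjObj_iff.1 (hL n)).2 (z ≫ D'.i n)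
      obtain ⟨z', hz'⟩ := (D.conflation n _ rfl).exists_desc (f ≫ D'.p n _ rfl) (by
        simp [reassoc_of% hf, D'.i_p])
      exact ⟨z', f, hf, hz'.symm⟩)
    (fun n z' ↦ by
      obtain ⟨f, hf⟩ := hK n _ (D'.conflation n _ rfl).isDeflation (D.p n _ rfl ≫ z')
      obtain ⟨z, hz⟩ := (D'.conflation n _ rfl).exists_lift (D.i n ≫ f) (by
        simp [hf, reassoc_of% (D.i_p n _ rfl)])
      exact ⟨z, f, hz.symm, hf⟩) a z
  choose f hif hfp using hr
  refine ⟨{ f := f, comm' := ?_ }, AcyclicData.cyclesMap_eq (hif a)⟩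
  rintro n _ rfl
  rw [D.d_eq n _ rfl, D'.d_eq n _ rfl, reassoc_of% (hfp n), Category.assoc, hif]

end IsProjectiveModelStr

/-! ### Null-homotopic morphisms -/

omit [HasZeroObject 𝒜] [HasBinaryBiproducts 𝒜] in
lemma nonempty_homotopy_zero {K L : CochainComplex 𝒜 ℤ} (f : K ⟶ L)
    (s : ∀ n, K.X (n + 1) ⟶ L.X n)
    (hs : ∀ n, f.f (n + 1) = s n ≫ L.d n (n + 1) + K.d (n + 1) (n + 1 + 1) ≫ s (n + 1)) :
    Nonempty (Homotopy f 0) := by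
  let σ (m n : ℤ) (hnm : (ComplexShape.up ℤ).Rel n m) : K.X m ⟶ L.X n := (K.XIsoOfEq hnm).inv ≫ s n
  have hf : f = Homotopy.nullHomotopicMap' σ := by
    ext m
    obtain ⟨n, rfl⟩ : ∃ n, m = n + 1 := ⟨m - 1, by lia⟩
    rw [Homotopy.nullHomotopicMap'_f (k₂ := n) (k₁ := n + 1) (k₀ := n + 1 + 1) rfl rfl, hs]
    simp [σ, HomologicalComplex.XIsoOfEq, add_comm]
  exact ⟨hf ▸ Homotopy.nullHomotopy' σ⟩

section

variable {K L : CochainComplex 𝒜 ℤ} (D : AcyclicData E K) (D' : AcyclicData E L)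

lemma AcyclicData.stableEq_cyclesMap_of_homotopy {f g : K ⟶ L} (H : Homotopy f g) {n : ℤ}
    (hK : IsProjObj E (K.X n)) : StableEq E (D.cyclesMap D' f n) (D.cyclesMap D' g n) := by
  obtain ⟨m, rfl⟩ : ∃ m, n = m + 1 := ⟨n - 1, by lia⟩
  refine ⟨K.X (m + 1), D.i (m + 1), H.hom (m + 1) m ≫ D'.p m _ rfl, hK, ?_⟩
  rw [← cancel_mono (D'.i (m + 1)), Preadditive.sub_comp, cyclesMap_i, cyclesMap_i,
    H.comm (m + 1), dNext_eq (i := m + 1) (i' := m + 1 + 1) _ rfl,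
    prevD_eq (j := m + 1) (j' := m) _ rfl]
  simp [reassoc_of% (D.i_d (m + 1) _ rfl), D'.d_eq m _ rfl]

lemma AcyclicData.exists_pred_homotopy (f : K ⟶ L) {n : ℤ} (hK : IsProjObj E (K.X (n + 1)))
    (s : K.X (n + 1 + 1) ⟶ L.X (n + 1))
    (hs : D.i (n + 1 + 1) ≫ s ≫ D'.p (n + 1) _ rfl = D.cyclesMap D' f (n + 1 + 1)) :
    ∃ r : K.X (n + 1) ⟶ L.X n, D.i (n + 1) ≫ r ≫ D'.p n _ rfl = D.cyclesMap D' f (n + 1) ∧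
      f.f (n + 1) = r ≫ L.d n (n + 1) + K.d (n + 1) (n + 1 + 1) ≫ s := by
  obtain ⟨w, hw⟩ := (D'.conflation (n + 1) _ rfl).exists_lift
    (f.f (n + 1) - K.d (n + 1) (n + 1 + 1) ≫ s) (by
      simp [Preadditive.sub_comp, D.f_p D', D.d_eq (n + 1) _ rfl, hs])
  obtain ⟨r, hr⟩ := hK _ (D'.conflation n _ rfl).isDeflation w
  refine ⟨r, ?_, ?_⟩
  · rw [← cancel_mono (D'.i (n + 1)), hr, Category.assoc, hw, cyclesMap_i]
    simp [reassoc_of% (D.i_d (n + 1) _ rfl)]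
  · rw [D'.d_eq n _ rfl, reassoc_of% hr, hw, sub_add_cancel]

end

namespace IsProjectiveModelStr

variable (h : IsProjectiveModelStr E C F W) {K L : CochainComplex 𝒜 ℤ} (D : AcyclicData E K)
  (D' : AcyclicData E L)
include h

lemma exists_succ_homotopy (f : K ⟶ L) {n : ℤ} (hD : Cofibrant C (D.Z (n + 1 + 1 + 1)))
    (hL : IsProjObj E (L.X (n + 1))) (s : K.X (n + 1) ⟶ L.X n)
    (hs : D.i (n + 1) ≫ s ≫ D'.p n _ rfl = D.cyclesMap D' f (n + 1)) :
    ∃ r : K.X (n + 1 + 1) ⟶ L.X (n + 1),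
      D.i (n + 1 + 1) ≫ r ≫ D'.p (n + 1) _ rfl = D.cyclesMap D' f (n + 1 + 1) ∧
      f.f (n + 1) = s ≫ L.d n (n + 1) + K.d (n + 1) (n + 1 + 1) ≫ r := by
  obtain ⟨w, hw⟩ := (D.conflation (n + 1) _ rfl).exists_desc (f.f (n + 1) - s ≫ L.d n (n + 1))
    (by rw [Preadditive.comp_sub, ← D.cyclesMap_i D', D'.d_eq n _ rfl, reassoc_of% hs, sub_self])
  obtain ⟨r, hr⟩ := h.exists_extension (D.conflation (n + 1 + 1) _ rfl) hD
    (h.isProjObj_iff.1 hL).2 w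
  refine ⟨r, ?_, ?_⟩
  · rw [reassoc_of% hr, ← cancel_epi (D.p (n + 1) _ rfl), reassoc_of% hw, ← D.f_p D']
    simp [Preadditive.sub_comp, D'.d_p]
  · rw [D.d_eq (n + 1) _ rfl, Category.assoc, hr, hw, add_sub_cancel]

lemma nonempty_homotopy_zero_of_stableEq {f : K ⟶ L} (hD : ∀ n, Cofibrant C (D.Z n))
    (hK : ∀ n, IsProjObj E (K.X n)) (hL : ∀ n, IsProjObj E (L.X n)) {n : ℤ}
    (hf : StableEq E (D.cyclesMap D' f n) 0) : Nonempty (Homotopy f 0) := by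
  obtain ⟨m, rfl⟩ : ∃ m, n = m + 1 := ⟨n - 1, by lia⟩
  obtain ⟨P, a, b, hP, hab⟩ := hf
  obtain ⟨a', rfl⟩ := h.exists_extension (D.conflation (m + 1) _ rfl) (hD _)
    (h.isProjObj_iff.1 hP).2 a
  obtain ⟨b', rfl⟩ := hP _ (D'.conflation m _ rfl).isDeflation b
  obtain ⟨t, -, hr⟩ := exists_int_seq (T := fun n ↦ {s : K.X (n + 1) ⟶ L.X n //
      D.i (n + 1) ≫ s ≫ D'.p n _ rfl = D.cyclesMap D' f (n + 1)})
    (fun n s r ↦ f.f (n + 1) = s.1 ≫ L.d n (n + 1) + K.d (n + 1) (n + 1 + 1) ≫ r.1)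
    (fun n s ↦
      have ⟨r, hr, hr'⟩ := h.exists_succ_homotopy D D' f (hD _) (hL _) s.1 s.2
      ⟨⟨r, hr⟩, hr'⟩)
    (fun n s ↦
      have ⟨r, hr, hr'⟩ := D.exists_pred_homotopy D' f (hK _) s.1 s.2
      ⟨⟨r, hr⟩, hr'⟩)
    m ⟨a' ≫ b', by simpa using hab.symm⟩
  exact nonempty_homotopy_zero f (fun n ↦ (t n).1) hr

end IsProjectiveModelStr

/-! ### The triangulated category of totally acyclic complexes -/

open CochainComplex Pretriangulated

section ConeCycles

variable {K L₀ L₁ Z₀ Z₁ Y₀ Y₁ Y₂ A₀ A₁ : 𝒜} {i : Z₀ ⟶ K} {p : K ⟶ Z₁} {p₀ : L₀ ⟶ Y₁}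
  {i₁ : Y₁ ⟶ L₁} {p₁ : L₁ ⟶ Y₂} {z₀ : Z₀ ⟶ Y₁} {z₁ : Z₁ ⟶ Y₂} {f : K ⟶ L₁}
  {a₀ : A₀ ⟶ L₀} {b₀ : A₀ ⟶ Z₀} {a₁ : A₁ ⟶ L₁} {b₁ : A₁ ⟶ Z₁} {π : K ⊞ L₀ ⟶ A₁}

lemma isDeflation_to_coneCycles (hK : E.conflation i p) (hp₀ : IsDeflation E p₀)
    (hL : E.conflation i₁ p₁) (h₁ : IsPullback a₁ b₁ p₁ (-z₁))
    (ha : π ≫ a₁ = biprod.desc f (p₀ ≫ i₁)) (hb : π ≫ b₁ = biprod.desc (-p) 0) :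
    IsDeflation E π := by
  obtain ⟨j, hja, hj⟩ := hL.of_isPullback h₁
  have hπ : π = biprod.desc (biprod.inl ≫ π) (p₀ ≫ j) := by
    apply h₁.hom_ext
    · ext <;> simp [ha, hja]
    · ext <;> simp [hb, E.comp_zero hj]
  rw [hπ]
  refine hj.isDeflation_biprod_desc_comp ?_ hp₀
  simpa [hb] using (hK.units_smul (-1)).isDeflation

lemma conflation_coneCycles (hK : E.conflation i p) (hp₀ : IsDeflation E p₀)
    (hL : E.conflation i₁ p₁) (hf : i ≫ f = z₀ ≫ i₁) (h₀ : IsPullback a₀ b₀ p₀ (-z₀))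
    (h₁ : IsPullback a₁ b₁ p₁ (-z₁)) (ha : π ≫ a₁ = biprod.desc f (p₀ ≫ i₁))
    (hb : π ≫ b₁ = biprod.desc (-p) 0) : E.conflation (biprod.lift (b₀ ≫ i) a₀) π := by
  have := hK.mono
  have := hL.mono
  have : Mono (biprod.lift (b₀ ≫ i) a₀) := Preadditive.mono_of_cancel_zero _ fun t ht ↦ by
    refine h₀.hom_ext (by simpa using ht =≫ biprod.snd) ?_
    simpa [← cancel_mono i] using ht =≫ biprod.fst
  refine (isDeflation_to_coneCycles hK hp₀ hL h₁ ha hb).conflation ?_ fun t ht ↦ ?_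
  · apply h₁.hom_ext
    · simp [ha, biprod.lift_desc, hf, reassoc_of% h₀.w]
    · simp [hb, biprod.lift_desc, E.comp_zero hK]
  · have hta : t ≫ biprod.fst ≫ f + t ≫ biprod.snd ≫ p₀ ≫ i₁ = 0 := by
      simpa [ha, biprod.desc_eq] using ht =≫ a₁
    have htb : (t ≫ biprod.fst) ≫ p = 0 := by simpa [hb, biprod.desc_eq] using ht =≫ b₁
    obtain ⟨s, hs⟩ := hK.exists_lift _ htb
    have hw : (t ≫ biprod.snd) ≫ p₀ = s ≫ (-z₀) := by
      rw [← cancel_mono i₁, Category.assoc, Category.assoc, eq_neg_of_add_eq_zero_right hta]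
      simp [← hf, reassoc_of% hs]
    exact ⟨h₀.lift _ s hw, by ext <;> simp [hs]⟩

end ConeCycles

/-- The decomposition of the terms of the mapping cone as biproducts. -/
noncomputable def mappingConeXIso {K L : CochainComplex 𝒜 ℤ} (φ : K ⟶ L) (n : ℤ) :
    K.X (n + 1) ⊞ L.X n ≅ (mappingCone φ).X n where
  hom := biprod.desc ((mappingCone.inl φ).v (n + 1) n (by lia)) ((mappingCone.inr φ).f n)
  inv := biprod.lift ((mappingCone.fst φ).1.v n (n + 1) rfl)
    ((mappingCone.snd φ).v n n (add_zero n))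
  hom_inv_id := by ext <;> simp
  inv_hom_id := by rw [biprod.lift_desc, mappingCone.id_X]

omit [HasZeroObject 𝒜] in
lemma mappingConeXIso_hom_d {K L : CochainComplex 𝒜 ℤ} (φ : K ⟶ L) (n : ℤ) :
    (mappingConeXIso φ n).hom ≫ (mappingCone φ).d n (n + 1) =
      biprod.lift (biprod.desc (-K.d (n + 1) (n + 1 + 1)) 0)
        (biprod.desc (φ.f (n + 1)) (L.d n (n + 1))) ≫ (mappingConeXIso φ (n + 1)).hom := by
  apply biprod.hom_ext'
  · simp [mappingConeXIso, mappingCone.inl_v_d φ (n + 1) n (n + 1 + 1) (by lia) (by lia),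
      biprod.lift_desc, sub_eq_neg_add]
  · simp [mappingConeXIso, biprod.lift_desc]

namespace AcyclicData

variable {K L : CochainComplex 𝒜 ℤ}

-- The cycles of the cone are the pairs `(x, y)` with `x` a cycle of `K` and `φ x + d y = 0`.
lemma exists_cone (D : AcyclicData E K) (D' : AcyclicData E L) (φ : K ⟶ L) :
    ∃ A : AcyclicData E (mappingCone φ), ∀ n, ∃ (i : D'.Z n ⟶ A.Z n) (d : A.Z n ⟶ D.Z (n + 1)),
      E.conflation i d := by
  choose A a b _ _ hA _ using fun n ↦
    E.pullback_deflation (D'.conflation n (n + 1) rfl) (-D.cyclesMap D' φ (n + 1))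
  have hw (n : ℤ) : biprod.desc (φ.f (n + 1)) (L.d n (n + 1)) ≫ D'.p (n + 1) _ rfl =
      biprod.desc (-D.p (n + 1) _ rfl) 0 ≫ (-D.cyclesMap D' φ (n + 1 + 1)) := by
    ext <;> simp [D.f_p D', D'.d_p]
  let π (n : ℤ) := (hA (n + 1)).lift _ _ (hw n)
  have ha (n : ℤ) : π n ≫ a (n + 1) = biprod.desc (φ.f (n + 1)) (L.d n (n + 1)) :=
    (hA (n + 1)).lift_fst _ _ (hw n)
  have hb (n : ℤ) : π n ≫ b (n + 1) = biprod.desc (-D.p (n + 1) _ rfl) 0 :=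
    (hA (n + 1)).lift_snd _ _ (hw n)
  have hconf (n : ℤ) : E.conflation (biprod.lift (b n ≫ D.i (n + 1)) (a n)) (π n) :=
    conflation_coneCycles (D.conflation _ _ rfl) (D'.conflation n _ rfl).isDeflation
      (D'.conflation (n + 1) _ rfl) (D.cyclesMap_i D' φ (n + 1)).symm (hA n) (hA (n + 1))
      (by rw [ha, D'.d_eq n _ rfl]) (hb n)
  refine ⟨.ofSucc A (fun n ↦ biprod.lift (b n ≫ D.i (n + 1)) (a n) ≫ (mappingConeXIso φ n).hom)
    (fun n ↦ (mappingConeXIso φ n).inv ≫ π n) (fun n ↦ ?_) (fun n ↦ ?_), fun n ↦ ?_⟩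
  · exact E.conflation_iso (Iso.refl _) (mappingConeXIso φ n) (Iso.refl _) (hconf n) (by simp)
      (by simp)
  · have hd : π n ≫ biprod.lift (b (n + 1) ≫ D.i (n + 1 + 1)) (a (n + 1)) =
        biprod.lift (biprod.desc (-K.d (n + 1) (n + 1 + 1)) 0)
          (biprod.desc (φ.f (n + 1)) (L.d n (n + 1))) := by
      ext <;> simp [reassoc_of% (hb n), ha, D.d_eq (n + 1) _ rfl]
    rw [← cancel_epi (mappingConeXIso φ n).hom, mappingConeXIso_hom_d, ← hd]
    simp
  · obtain ⟨j, -, hj⟩ := (D'.conflation n _ rfl).of_isPullback (hA n)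
    exact ⟨j, _, hj⟩

/-- The presentation of a shifted complex by the same conflations, up to sign. -/
noncomputable def shift (D : AcyclicData E K) (a : ℤ) : AcyclicData E (K⟦a⟧) where
  Z n := D.Z (n + a)
  i n := D.i (n + a)
  p n m hnm := a.negOnePow • D.p (n + a) (m + a) (by lia)
  conflation n m hnm := (D.conflation (n + a) (m + a) (by lia)).units_smul _
  d_eq n m hnm := by
    rw [CochainComplex.shiftFunctor_obj_d', D.d_eq (n + a) (m + a) (by lia)]
    exact (Linear.units_smul_comp _ _ _).symm

end AcyclicData

lemma totallyAcyclic_shift {K : CochainComplex 𝒜 ℤ} (hK : totallyAcyclic E C K) (a : ℤ) :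
    totallyAcyclic E C (K⟦a⟧) :=
  have ⟨D, hD, hK⟩ := hK
  ⟨D.shift a, fun _ ↦ hD _, fun _ ↦ hK _⟩

namespace IsProjectiveModelStr

variable (h : IsProjectiveModelStr E C F W)
include h

lemma totallyAcyclic_zero : totallyAcyclic E C 0 := by
  have hX (n : ℤ) : IsZero ((0 : CochainComplex 𝒜 ℤ).X n) :=
    (HomologicalComplex.eval 𝒜 (.up ℤ) n).map_isZero (isZero_zero _)
  let e (n : ℤ) : (0 : 𝒜) ≅ (0 : CochainComplex 𝒜 ℤ).X n := (isZero_zero 𝒜).iso (hX n)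
  have hconf (n : ℤ) : E.conflation (0 : (0 : 𝒜) ⟶ (0 : CochainComplex 𝒜 ℤ).X n)
      (0 : _ ⟶ (0 : 𝒜)) :=
    E.conflation_iso (Iso.refl _) (e n) (Iso.refl _) (E.id_deflation 0) (by simp)
      ((isZero_zero 𝒜).eq_of_src _ _)
  exact ⟨.ofSucc (fun _ ↦ 0) _ _ hconf fun n ↦ (hX n).eq_of_src _ _,
    fun _ ↦ (h.isProjObj_iff.1 IsProjObj.zero).1, fun n ↦ IsProjObj.of_iso (e n) IsProjObj.zero⟩

lemma totallyAcyclic_mappingCone {K L : CochainComplex 𝒜 ℤ} (hK : totallyAcyclic E C K)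
    (hL : totallyAcyclic E C L) (φ : K ⟶ L) : totallyAcyclic E C (mappingCone φ) := by
  obtain ⟨D, hD, hK⟩ := hK
  obtain ⟨D', hD', hL⟩ := hL
  obtain ⟨A, hA⟩ := D.exists_cone D' φ
  refine ⟨A, fun n ↦ ?_,
    fun n ↦ IsProjObj.of_iso (mappingConeXIso φ n) (IsProjObj.biprod (hK _) (hL n))⟩
  obtain ⟨i, d, hid⟩ := hA n
  exact h.1.cofibrant_of_extension hid (hD' n) (hD _)

lemma isTriangulated_map_quotient_totallyAcyclic :
    ((totallyAcyclic E C).map (HomotopyCategory.quotient 𝒜 (.up ℤ))).IsTriangulated := by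
  let Q := HomotopyCategory.quotient 𝒜 (.up ℤ)
  let P := (totallyAcyclic E C).map Q
  have : P.ContainsZero :=
    ⟨⟨Q.obj 0, Q.map_isZero (isZero_zero _), ObjectProperty.prop_map_obj _ _ h.totallyAcyclic_zero⟩⟩
  have : P.IsStableUnderShift ℤ := ⟨fun a ↦ ⟨by
    rintro X ⟨K, hK, ⟨e⟩⟩
    exact ⟨K⟦a⟧, totallyAcyclic_shift hK a,
      ⟨(Q.commShiftIso a).app K ≪≫ (CategoryTheory.shiftFunctor _ a).mapIso e⟩⟩⟩⟩
  have : P.IsTriangulatedClosed₃ := .mk' (by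
    rintro T hT ⟨K, hK, ⟨e⟩⟩ ⟨L, hL, ⟨e'⟩⟩
    obtain ⟨φ, hφ⟩ := Q.map_surjective (e.hom ≫ T.mor₁ ≫ e'.inv)
    refine ⟨mappingCone φ, h.totallyAcyclic_mappingCone hK hL φ,
      ⟨Triangle.π₃.mapIso (isoTriangleOfIso₁₂ (mappingCone.triangleh φ) T
        (HomotopyCategory.mappingCone_triangleh_distinguished φ) hT e e' ?_)⟩⟩
    change Q.map φ ≫ e'.hom = e.hom ≫ T.mor₁
    simp [hφ])
  have : P.IsTriangulatedClosed₂ := .of_isTriangulatedClosed₃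
  exact {}

end IsProjectiveModelStr

/-! ### The homotopy category -/

/-- The cycles in degree `0` of totally acyclic complexes, with respect to chosen presentations
as splicings of conflations. -/
noncomputable def cyclesFunctor (E : ExactStructure 𝒜) (C : MorphismProperty 𝒜) :
    (totallyAcyclic E C).FullSubcategory ⥤ 𝒜 where
  obj K := K.property.choose.Z 0
  map f := AcyclicData.cyclesMap _ _ f.hom 0
  map_id _ := AcyclicData.cyclesMap_id _ _
  map_comp _ _ := AcyclicData.cyclesMap_comp _ _ _ _ _ _

/-- The passage from totally acyclic complexes to the homotopy category of complexes. -/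
noncomputable def totallyAcyclicQuotient (E : ExactStructure 𝒜) (C : MorphismProperty 𝒜) :
    (totallyAcyclic E C).FullSubcategory ⥤
      ((totallyAcyclic E C).map (HomotopyCategory.quotient 𝒜 (.up ℤ))).FullSubcategory :=
  ObjectProperty.lift _ ((totallyAcyclic E C).ι ⋙ HomotopyCategory.quotient 𝒜 (.up ℤ))
    fun K ↦ ObjectProperty.prop_map_obj _ _ K.property

instance : (totallyAcyclicQuotient E C).Full := by
  unfold totallyAcyclicQuotient
  infer_instance

instance : (totallyAcyclicQuotient E C).EssSurj where
  mem_essImage := by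
    rintro ⟨X, K, hK, ⟨e⟩⟩
    exact ⟨⟨K, hK⟩, ⟨ObjectProperty.isoMk _ e⟩⟩

lemma totallyAcyclicQuotient_map_eq_iff {K L : (totallyAcyclic E C).FullSubcategory}
    {f g : K ⟶ L} : (totallyAcyclicQuotient E C).map f = (totallyAcyclicQuotient E C).map g ↔
      Nonempty (Homotopy f.hom g.hom) := by
  refine ⟨fun hfg ↦ ⟨HomotopyCategory.homotopyOfEq _ _ (congrArg (·.hom) hfg)⟩, ?_⟩
  rintro ⟨H⟩
  exact ObjectProperty.hom_ext _ (HomotopyCategory.eq_of_homotopy _ _ H)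

namespace IsProjectiveModelStr

variable (h : IsProjectiveModelStr E C F W)
include h

lemma full_cyclesFunctor_comp_Q : (cyclesFunctor E C ⋙ W.Q).Full where
  map_surjective {K L} u := by
    obtain ⟨hD, hK⟩ := K.property.choose_spec
    obtain ⟨z, rfl⟩ := h.map_Q_surjective (hD 0) _ u
    obtain ⟨f, hf⟩ := h.exists_cyclesMap_eq hD hK L.property.choose_spec.2 z
    exact ⟨⟨f⟩, congrArg W.Q.map hf⟩

lemma essSurj_cyclesFunctor_comp_Q : (cyclesFunctor E C ⋙ W.Q).EssSurj where
  mem_essImage Y := by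
    have := Localization.essSurj W.Q W
    obtain ⟨X, q, hX, -, hq⟩ :=
      h.isModelStructure.exists_cofibrant_replacement (W.Q.objPreimage Y)
    obtain ⟨K, D, hD, hK, rfl⟩ := h.exists_acyclicData hX 0
    have := Localization.inverts W.Q W q hq
    let K' : (totallyAcyclic E C).FullSubcategory := ⟨K, D, hD, hK⟩
    exact ⟨K', ⟨W.Q.mapIso (AcyclicData.cyclesIso K'.property.choose D 0) ≪≫ asIso (W.Q.map q) ≪≫
      W.Q.objObjPreimageIso Y⟩⟩

lemma nonempty_homotopy_iff_map_Q_cyclesFunctor_eq {K L : (totallyAcyclic E C).FullSubcategory}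
    {f g : K ⟶ L} : Nonempty (Homotopy f.hom g.hom) ↔
      W.Q.map ((cyclesFunctor E C).map f) = W.Q.map ((cyclesFunctor E C).map g) := by
  obtain ⟨hD, hK⟩ := K.property.choose_spec
  refine Iff.trans ?_ (h.map_Q_eq_iff (hD 0)).symm
  constructor
  · rintro ⟨H⟩
    exact AcyclicData.stableEq_cyclesMap_of_homotopy _ _ H (hK 0)
  · rintro ⟨P, a, b, hP, hab⟩
    obtain ⟨H⟩ := h.nonempty_homotopy_zero_of_stableEq (f := f.hom - g.hom) _
      L.property.choose hD hK L.property.choose_spec.2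
      ⟨P, a, b, hP, by rwa [AcyclicData.cyclesMap_sub, sub_zero]⟩
    exact ⟨Homotopy.equivSubZero.symm H⟩

lemma nonempty_equivalence_localization : Nonempty
    (((totallyAcyclic E C).map (HomotopyCategory.quotient 𝒜 (.up ℤ))).FullSubcategory ≌
      W.Localization) := by
  have := h.full_cyclesFunctor_comp_Q
  have := h.essSurj_cyclesFunctor_comp_Q
  exact nonempty_equivalence_of_map_eq_iff (totallyAcyclicQuotient E C) (cyclesFunctor E C ⋙ W.Q)
    fun _ _ ↦ totallyAcyclicQuotient_map_eq_iff.trans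
      h.nonempty_homotopy_iff_map_Q_cyclesFunctor_eq

lemma nonempty_triangulatedStructure_localization :
    Nonempty (TriangulatedStructure W.Localization) := by
  have := h.isTriangulated_map_quotient_totallyAcyclic
  obtain ⟨e⟩ := h.nonempty_equivalence_localization
  exact nonempty_triangulatedStructure_of_isEquivalence e.functor

end IsProjectiveModelStr

end

theorem stmt_18_general (E : ExactStructure 𝒜) (C F W : MorphismProperty 𝒜) :
    ((IsExactModelStr E C F W ∧ IsWeaklyProjModelStr E C F W) ↔
      IsProjectiveModelStr E C F W) ∧
    (IsProjectiveModelStr E C F W →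
      Nonempty (TriangulatedStructure W.Localization)) :=
  ⟨isExactModelStr_and_isWeaklyProjModelStr_iff,
    fun h ↦ h.nonempty_triangulatedStructure_localization⟩

/-- A model structure is both exact and weakly projective iff it is projective;
in that case the homotopy category carries a triangulated structure. -/
theorem stmt_18 (E : ExactStructure 𝒜) (hwic : IsWIC E)
    (C F W : MorphismProperty 𝒜) (hms : IsModelStructure C F W) :
    ((IsExactModelStr E C F W ∧ IsWeaklyProjModelStr E C F W) ↔
      IsProjectiveModelStr E C F W) ∧
    (IsProjectiveModelStr E C F W →
      Nonempty (TriangulatedStructure W.Localization)) :=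
  stmt_18_general E C F W
end
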